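/- arXiv:2102.09855 — 10 statements merged into one kernel-verified Lean document; each statement's English description precedes it below -/
import Mathlib

section
/- For every f in C([a,b]), the function T_f is well defined (the two defining formulas agree at each node x_n, n ≥ 1) and T_f belongs to C([a,b]); that is, T_f is continuous on [a,b] (in particular left continuous at b) and satisfies T_f(a) = m and T_f(b) = M. Consequently the operator T : C([a,b]) → C([a,b]), T(f) = T_f, is well defined. -/
/-!
The intervals `[x n, x (n+1)]` cover `[x 0, b)` and overlap only at nodes. At the node `x (n+1)` the
two defining formulas are `W (n+1) b M` and `W (n+2) (x 0) (y 0)`, both equal to `y (n+1)`, so the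
pieces glue to a function `Tf`. On each interval `Tf` is continuous because `l (n+1)`, a continuous
map on a compact set, is a quotient map onto its image (`continuousOn_image_of_comp`). Gluing
finitely many closed intervals gives continuity on `[x 0, b)`.

At `b`, if `t ∈ [x n, x (n+1)]` then `Tf t` and `y n` both lie in the image of `W (n+1)`, so
`dist (Tf t) M ≤ diam (Im W (n+1)) + dist (y n) M`. Both terms tend to `0`, and `n → ∞` as `t → b⁻`.
-/

open Set Filter Metric

/-- A continuous map on a compact set is closed, hence a quotient map onto its image: continuity of
`g` on the image may be tested after composition. -/
lemma continuousOn_image_of_comp {Y : Type*} [TopologicalSpace Y] {K : Set ℝ} (hK : IsCompact K)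
    {l : ℝ → ℝ} (hl : ContinuousOn l K) {g : ℝ → Y} (hg : ContinuousOn (fun u => g (l u)) K) :
    ContinuousOn g (l '' K) := by
  rw [continuousOn_iff_isClosed]
  intro C hC
  refine ⟨l '' (K ∩ (fun u => g (l u)) ⁻¹' C), ?_, ?_⟩
  · have hcl := hg.preimage_isClosed_of_isClosed hK.isClosed hC
    exact ((hK.of_isClosed_subset hcl inter_subset_left).image_of_continuousOn
      (hl.mono inter_subset_left)).isClosed
  · ext t
    constructor
    · rintro ⟨ht, u, hu, rfl⟩
      exact ⟨⟨u, ⟨hu, ht⟩, rfl⟩, u, hu, rfl⟩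
    · rintro ⟨⟨u, ⟨hu, hu'⟩, rfl⟩, h⟩
      exact ⟨hu', h⟩

/-- A point lying between `x 0` and the limit `b` belongs to one of the intervals between
consecutive nodes. -/
lemma exists_mem_Ico_node {x : ℕ → ℝ} {b : ℝ} (hxb : Tendsto x atTop (nhds b)) {t : ℝ}
    (h0 : x 0 ≤ t) (hb : t < b) : ∃ n, x n ≤ t ∧ t < x (n + 1) := by
  by_contra! h
  have hall : ∀ n, x n ≤ t := fun n => Nat.rec h0 (fun k hk => h k hk) n
  exact absurd (le_of_tendsto' hxb hall) (not_le.mpr hb)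

/-- A function continuous on each interval between consecutive nodes is continuous on every
interval `[x 0, x n]`. -/
lemma continuousOn_Icc_node {Y : Type*} [TopologicalSpace Y] {x : ℕ → ℝ} (hx : Monotone x)
    {g : ℝ → Y} (hg : ∀ n, ContinuousOn g (Icc (x n) (x (n + 1)))) (n : ℕ) :
    ContinuousOn g (Icc (x 0) (x n)) := by
  induction n with
  | zero => simp
  | succ k ih =>
    rw [← Icc_union_Icc_eq_Icc (hx (Nat.zero_le k)) (hx (Nat.le_succ k))]
    exact ih.union_of_isClosed (hg k) isClosed_Icc isClosed_Icc

theorem T_well_defined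
    {Y : Type*} [MetricSpace Y] [CompactSpace Y]
    (x : ℕ → ℝ) (hx : StrictMono x) (b : ℝ) (hxb : Tendsto x atTop (nhds b))
    (y : ℕ → Y) (M : Y) (hyM : Tendsto y atTop (nhds M))
    (L : ℕ → ℝ) (hL0 : ∀ n : ℕ, 0 ≤ L (n + 1)) (hL1 : ∀ n : ℕ, L (n + 1) < 1)
    (hLsup : (⨆ n : ℕ, L (n + 1)) < 1)
    (l : ℕ → ℝ → ℝ)
    (hl_lip : ∀ n : ℕ, ∀ u ∈ Icc (x 0) b, ∀ v ∈ Icc (x 0) b,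
      |l (n + 1) u - l (n + 1) v| ≤ L (n + 1) * |u - v|)
    (hl_inj : ∀ n : ℕ, InjOn (l (n + 1)) (Icc (x 0) b))
    (hl_image : ∀ n : ℕ, l (n + 1) '' Icc (x 0) b = Icc (x n) (x (n + 1)))
    (hl_a : ∀ n : ℕ, l (n + 1) (x 0) = x n) (hl_b : ∀ n : ℕ, l (n + 1) b = x (n + 1))
    (W : ℕ → ℝ → Y → Y)
    (hW_cont : ∀ n : ℕ, ContinuousOn (fun p : ℝ × Y => W (n + 1) p.1 p.2)
      (Icc (x 0) b ×ˢ (univ : Set Y)))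
    (hW_a : ∀ n : ℕ, W (n + 1) (x 0) (y 0) = y n)
    (hW_b : ∀ n : ℕ, W (n + 1) b M = y (n + 1))
    (hW_diam : Tendsto (fun n : ℕ =>
      Metric.diam ((fun p : ℝ × Y => W (n + 1) p.1 p.2) ''
        (Icc (x 0) b ×ˢ (univ : Set Y)))) atTop (nhds 0))
    :
    ∀ f : ℝ → Y, ContinuousOn f (Icc (x 0) b) → f (x 0) = y 0 → f b = M →
      (∀ n : ℕ, W (n + 1) b (f b) = y (n + 1) ∧ W (n + 2) (x 0) (f (x 0)) = y (n + 1)) ∧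
      ∃ Tf : ℝ → Y,
        (∀ n : ℕ, ∀ u ∈ Icc (x 0) b, Tf (l (n + 1) u) = W (n + 1) u (f u)) ∧
        Tf b = M ∧ ContinuousOn Tf (Icc (x 0) b) ∧ Tf (x 0) = y 0 ∧
        ∀ g : ℝ → Y,
          (∀ n : ℕ, ∀ u ∈ Icc (x 0) b, g (l (n + 1) u) = W (n + 1) u (f u)) → g b = M →
          EqOn g Tf (Icc (x 0) b) := by
  classical
  intro f hf hfa hfb
  have hltb : ∀ n, x n < b := fun n =>
    (hx (Nat.lt_succ_self n)).trans_le (hx.monotone.ge_of_tendsto hxb (n + 1))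
  have ha_mem : x 0 ∈ Icc (x 0) b := ⟨le_rfl, (hltb 0).le⟩
  have hb_mem : b ∈ Icc (x 0) b := ⟨(hltb 0).le, le_rfl⟩
  have hl_mem : ∀ n, ∀ u ∈ Icc (x 0) b, l (n + 1) u ∈ Icc (x n) (x (n + 1)) := fun n u hu =>
    hl_image n ▸ mem_image_of_mem _ hu
  have hnode : ∀ n, W (n + 1) b (f b) = y (n + 1) ∧ W (n + 2) (x 0) (f (x 0)) = y (n + 1) :=
    fun n => ⟨by rw [hfb, hW_b], by rw [hfa, hW_a (n + 1)]⟩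
  -- Points of two different intervals coincide only at a common node.
  have hlt : ∀ n m, n < m → ∀ u ∈ Icc (x 0) b, ∀ v ∈ Icc (x 0) b,
      l (n + 1) u = l (m + 1) v → W (n + 1) u (f u) = W (m + 1) v (f v) := by
    intro n m hnm u hu v hv h
    have h1 := (hl_mem n u hu).2
    have h2 := (hl_mem m v hv).1
    have h3 : x (n + 1) ≤ x m := hx.monotone hnm
    obtain rfl : n + 1 = m := hx.injective (le_antisymm h3 (by linarith))
    obtain rfl : u = b := hl_inj n hu hb_mem (by rw [hl_b]; linarith)
    obtain rfl : v = x 0 := hl_inj (n + 1) hv ha_mem (by rw [hl_a]; linarith)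
    exact (hnode n).1.trans (hnode n).2.symm
  have hcons : ∀ n m, ∀ u ∈ Icc (x 0) b, ∀ v ∈ Icc (x 0) b,
      l (n + 1) u = l (m + 1) v → W (n + 1) u (f u) = W (m + 1) v (f v) := by
    intro n m u hu v hv h
    rcases lt_trichotomy n m with hnm | rfl | hnm
    · exact hlt n m hnm u hu v hv h
    · rw [hl_inj n hu hv h]
    · exact (hlt m n hnm v hv u hu h.symm).symm
  obtain ⟨Tf, hTf, hTb⟩ : ∃ Tf : ℝ → Y,
      (∀ n : ℕ, ∀ u ∈ Icc (x 0) b, Tf (l (n + 1) u) = W (n + 1) u (f u)) ∧ Tf b = M := by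
    refine ⟨fun t => if h : ∃ p : ℕ × ℝ, p.2 ∈ Icc (x 0) b ∧ l (p.1 + 1) p.2 = t then
      W (h.choose.1 + 1) h.choose.2 (f h.choose.2) else M, ?_, ?_⟩
    · intro n u hu
      have h : ∃ p : ℕ × ℝ, p.2 ∈ Icc (x 0) b ∧ l (p.1 + 1) p.2 = l (n + 1) u :=
        ⟨(n, u), hu, rfl⟩
      simp only [dif_pos h]
      exact hcons _ _ _ h.choose_spec.1 _ hu h.choose_spec.2
    · refine dif_neg ?_
      rintro ⟨⟨n, u⟩, hu, h⟩
      exact absurd (hl_mem n u hu).2 (by rw [h]; exact not_le.mpr (hltb _))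
  have hcov : ∀ t ∈ Icc (x 0) b, t < b → ∃ n, ∃ u ∈ Icc (x 0) b, l (n + 1) u = t ∧
      t < x (n + 1) := by
    intro t ht htb
    obtain ⟨n, h1, h2⟩ := exists_mem_Ico_node hxb ht.1 htb
    obtain ⟨u, hu, hut⟩ : t ∈ l (n + 1) '' Icc (x 0) b := hl_image n ▸ ⟨h1, h2.le⟩
    exact ⟨n, u, hu, hut, h2⟩
  have hpiece : ∀ n, ContinuousOn Tf (Icc (x n) (x (n + 1))) := by
    intro n
    rw [← hl_image n]
    refine continuousOn_image_of_comp isCompact_Icc ?_ ?_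
    · have hlip : LipschitzOnWith (L (n + 1)).toNNReal (l (n + 1)) (Icc (x 0) b) :=
        LipschitzOnWith.of_dist_le_mul fun u hu v hv => by
          rw [Real.coe_toNNReal _ (hL0 n), Real.dist_eq, Real.dist_eq]
          exact hl_lip n u hu v hv
      exact hlip.continuousOn
    · have hWf : ContinuousOn (fun u => W (n + 1) u (f u)) (Icc (x 0) b) :=
        (hW_cont n).comp (continuousOn_id.prodMk hf) fun u hu => ⟨hu, mem_univ _⟩
      exact hWf.congr (hTf n)
  have hbound : ∀ n, ∀ u ∈ Icc (x 0) b, dist (Tf (l (n + 1) u)) M ≤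
      Metric.diam ((fun p : ℝ × Y => W (n + 1) p.1 p.2) ''
        (Icc (x 0) b ×ˢ (univ : Set Y))) + dist (y n) M := by
    intro n u hu
    refine (dist_triangle _ (y n) _).trans (add_le_add_left ?_ _)
    refine Metric.dist_le_diam_of_mem Metric.isBounded_of_compactSpace ?_ ?_
    · exact ⟨(u, f u), ⟨hu, mem_univ _⟩, (hTf n u hu).symm⟩
    · exact ⟨(x 0, y 0), ⟨ha_mem, mem_univ _⟩, hW_a n⟩
  refine ⟨hnode, Tf, hTf, hTb, ?_, ?_, ?_⟩
  · intro t ht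
    rcases ht.2.lt_or_eq with htb | rfl
    · obtain ⟨n, -, -, -, hn⟩ := hcov t ht htb
      refine (continuousOn_Icc_node hx.monotone hpiece (n + 1) t
        ⟨ht.1, hn.le⟩).mono_of_mem_nhdsWithin ?_
      filter_upwards [self_mem_nhdsWithin, mem_nhdsWithin_of_mem_nhds (Iio_mem_nhds hn)]
        with s hs hs'
      exact ⟨hs.1, le_of_lt hs'⟩
    · rw [ContinuousWithinAt, hTb, Metric.tendsto_nhds]
      intro ε hε
      have hlim := hW_diam.add (tendsto_iff_dist_tendsto_zero.mp hyM)
      rw [add_zero] at hlim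
      obtain ⟨N, hN⟩ := eventually_atTop.mp (hlim.eventually_lt_const hε)
      filter_upwards [self_mem_nhdsWithin, mem_nhdsWithin_of_mem_nhds (Ioi_mem_nhds (hltb N))]
        with s hs hs'
      rcases hs.2.lt_or_eq with hst | rfl
      · obtain ⟨n, u, hu, rfl, hn⟩ := hcov s hs hst
        have hNn : N < n + 1 := hx.lt_iff_lt.mp (lt_trans hs' hn)
        exact (hbound n u hu).trans_lt (hN n (Nat.lt_succ_iff.mp hNn))
      · rwa [hTb, dist_self]
  · rw [← hl_a 0, hTf 0 _ ha_mem, hfa, hW_a 0]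
  · intro g hg hgb t ht
    rcases ht.2.lt_or_eq with htb | rfl
    · obtain ⟨n, u, hu, rfl, -⟩ := hcov t ht htb
      rw [hg n u hu, hTf n u hu]
    · rw [hgb, hTb]
end

section
/- (Theorem 3.1) Suppose there exists a non-decreasing function φ : [0,∞) → [0,∞) with lim_{k→∞} φ^{[k]}(t) = 0 for all t > 0 (φ^{[k]} the k-fold iterate), such that d(W_n(x,y), W_n(x,y')) ≤ φ(d(y,y')) for all x ∈ [a,b], all y, y' ∈ Y and all n ≥ 1. Then the operator T is a Matkowski contraction with comparison function φ; that is, for all g, h ∈ C([a,b]), sup_{x ∈ [a,b]} d(Tg(x), Th(x)) ≤ φ(sup_{x ∈ [a,b]} d(g(x), h(x))). -/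
/-!
Each point `u < b` of `[x 0, b]` lies in some `[x n, x (n + 1)]`, because `x` increases to `b`, so
`u = l (n + 1) v` with `v ∈ [x 0, b]`. Then `T g u` and `T h u` are `W (n + 1) v (g v)` and
`W (n + 1) v (h v)`, at distance at most `φ (dist (g v) (h v))`, and monotonicity of `φ` bounds this
by `φ` of the supremum. At `u = b` both values are `M`.
-/

open Set Filter Metric

theorem T_is_Matkowski_contraction
    {Y : Type*} [MetricSpace Y] [CompactSpace Y]
    (x : ℕ → ℝ) (hx : StrictMono x) (b : ℝ) (hxb : Tendsto x atTop (nhds b))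
    (y : ℕ → Y) (M : Y) (hyM : Tendsto y atTop (nhds M))
    (L : ℕ → ℝ) (hL0 : ∀ n : ℕ, 0 ≤ L (n + 1)) (hL1 : ∀ n : ℕ, L (n + 1) < 1)
    (hLsup : (⨆ n : ℕ, L (n + 1)) < 1)
    (l : ℕ → ℝ → ℝ)
    (hl_lip : ∀ n : ℕ, ∀ u ∈ Icc (x 0) b, ∀ v ∈ Icc (x 0) b,
      |l (n + 1) u - l (n + 1) v| ≤ L (n + 1) * |u - v|)
    (hl_inj : ∀ n : ℕ, InjOn (l (n + 1)) (Icc (x 0) b))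
    (hl_image : ∀ n : ℕ, l (n + 1) '' Icc (x 0) b = Icc (x n) (x (n + 1)))
    (hl_a : ∀ n : ℕ, l (n + 1) (x 0) = x n) (hl_b : ∀ n : ℕ, l (n + 1) b = x (n + 1))
    (W : ℕ → ℝ → Y → Y)
    (hW_cont : ∀ n : ℕ, ContinuousOn (fun p : ℝ × Y => W (n + 1) p.1 p.2)
      (Icc (x 0) b ×ˢ (univ : Set Y)))
    (hW_a : ∀ n : ℕ, W (n + 1) (x 0) (y 0) = y n)
    (hW_b : ∀ n : ℕ, W (n + 1) b M = y (n + 1))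
    (hW_diam : Tendsto (fun n : ℕ =>
      Metric.diam ((fun p : ℝ × Y => W (n + 1) p.1 p.2) ''
        (Icc (x 0) b ×ˢ (univ : Set Y)))) atTop (nhds 0))
    (φ : ℝ → ℝ) (hφ0 : ∀ t : ℝ, 0 ≤ t → 0 ≤ φ t)
    (hφmono : ∀ s t : ℝ, 0 ≤ s → s ≤ t → φ s ≤ φ t)
    (hφiter : ∀ t : ℝ, 0 < t → Tendsto (fun k : ℕ => φ^[k] t) atTop (nhds 0))
    (hWφ : ∀ n : ℕ, ∀ u ∈ Icc (x 0) b, ∀ p q : Y,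
      dist (W (n + 1) u p) (W (n + 1) u q) ≤ φ (dist p q))
    (T : (ℝ → Y) → ℝ → Y)
    (hT : ∀ f : ℝ → Y, ContinuousOn f (Icc (x 0) b) → f (x 0) = y 0 → f b = M →
      (∀ n : ℕ, ∀ u ∈ Icc (x 0) b, T f (l (n + 1) u) = W (n + 1) u (f u)) ∧ T f b = M)
    :
    ∀ g h : ℝ → Y, ContinuousOn g (Icc (x 0) b) → g (x 0) = y 0 → g b = M →
      ContinuousOn h (Icc (x 0) b) → h (x 0) = y 0 → h b = M →
      (⨆ u : Icc (x 0) b, dist (T g u.1) (T h u.1)) ≤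
        φ (⨆ u : Icc (x 0) b, dist (g u.1) (h u.1)) := by
  intro g h hg hga hgb hh hha hhb
  obtain ⟨hTg, hTgb⟩ := hT g hg hga hgb
  obtain ⟨hTh, hThb⟩ := hT h hh hha hhb
  have hx0b : x 0 ≤ b := hx.monotone.ge_of_tendsto hxb 0
  have : Nonempty (Icc (x 0) b) := ⟨⟨b, right_mem_Icc.2 hx0b⟩⟩
  -- `Y` is compact, hence bounded, so the supremum on the right is a genuine one.
  have hbdd : BddAbove (range fun u : Icc (x 0) b => dist (g u.1) (h u.1)) := by
    refine ⟨diam (univ : Set Y), ?_⟩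
    rintro _ ⟨u, rfl⟩
    exact dist_le_diam_of_mem isCompact_univ.isBounded (mem_univ _) (mem_univ _)
  have hle : ∀ v ∈ Icc (x 0) b,
      dist (g v) (h v) ≤ ⨆ u : Icc (x 0) b, dist (g u.1) (h u.1) :=
    fun v hv => le_ciSup hbdd ⟨v, hv⟩
  refine ciSup_le ?_
  rintro ⟨u, hu⟩
  rcases hu.2.eq_or_lt with hub | hub
  · subst hub
    simp only [hTgb, hThb, dist_self]
    exact hφ0 _ (dist_nonneg.trans (hle u hu))
  · -- The least index `k` with `u < x k` is positive, which places `u` in `[x (k - 1), x k]`.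
    have hex : ∃ k, u < x k := (hxb.eventually_const_lt hub).exists
    classical
    obtain ⟨n, hn⟩ : ∃ n, Nat.find hex = n + 1 := by
      refine Nat.exists_eq_succ_of_ne_zero fun h0 => ?_
      have := Nat.find_spec hex
      rw [h0] at this
      exact absurd hu.1 this.not_ge
    have hlt : u < x (n + 1) := hn ▸ Nat.find_spec hex
    have hge : x n ≤ u := not_lt.1 (Nat.find_min hex (by omega))
    have hmem : u ∈ l (n + 1) '' Icc (x 0) b := by
      rw [hl_image]
      exact ⟨hge, hlt.le⟩
    obtain ⟨v, hv, rfl⟩ := hmem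
    simp only [hTg n v hv, hTh n v hv]
    exact (hWφ n v hv _ _).trans (hφmono _ _ dist_nonneg (hle v hv))
end

section
/- (Theorem 3.2) Suppose there exist L > 0 and a non-decreasing function φ : [0,∞) → [0,∞) with φ(t)/t < 1 for all t > 0 and t ↦ φ(t)/t non-increasing on (0,∞), such that d(W_n(x,y), W_n(x',y')) ≤ L|x − x'| + φ(d(y,y')) for all (x,y), (x',y') ∈ [a,b] × Y and all n ≥ 1. Set θ = (1 − sup_{n≥1} L_n)/(2(L+1)) ∈ (0,1) and define the metric d_θ on [a,b] × Y by d_θ((x,y),(x',y')) = |x − x'| + θ·d(y,y'). Then every map f_n(x,y) = (l_n(x), W_n(x,y)) is a Rakotch contraction with respect to d_θ: there is a function ψ : [0,∞) → [0,∞) with ψ(t)/t < 1 for all t > 0 and t ↦ ψ(t)/t non-increasing, namely ψ(t) = t·max{sup_{n≥1} L_n + θ(L+1), φ(t)/t}, such that d_θ(f_n(p), f_n(q)) ≤ ψ(d_θ(p,q)) for all p, q ∈ [a,b] × Y and all n ≥ 1. -/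
/-!
Put `c = s + θ (Lc + 1)`, `t = |u - v| + θ d` with `d = dist p q`, and `m = max c (φ t / t)`. The choice
of `θ` gives `c = (1 + s) / 2 < 1`, hence `m < 1`, and `ψ t / t = m` inherits monotonicity from
`φ t / t`. For the contraction estimate it is enough to bound
`(L + θ Lc) |u - v| + θ φ d` by `m t`, where `L + θ Lc ≤ c - θ ≤ m - θ`.

* If `t ≤ d`, then `φ d / d ≤ φ t / t ≤ m`, so `φ d ≤ m d` and the bound follows term by term.
* If `d ≤ t`, monotonicity of `φ` gives `φ d ≤ φ t ≤ m t`. The extra term `θ m |u - v|` produced in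
  this way is absorbed by the spare `-θ |u - v|` because `m ≤ 1`, and `θ ^ 2 m d ≤ θ m d`
  because `θ ≤ 1`.
-/

open Set Filter Metric

theorem fn_Rakotch_contraction
    {Y : Type*} [MetricSpace Y] [CompactSpace Y]
    (x : ℕ → ℝ) (hx : StrictMono x) (b : ℝ) (hxb : Tendsto x atTop (nhds b))
    (y : ℕ → Y) (M : Y) (hyM : Tendsto y atTop (nhds M))
    (L : ℕ → ℝ) (hL0 : ∀ n : ℕ, 0 ≤ L (n + 1)) (hL1 : ∀ n : ℕ, L (n + 1) < 1)
    (hLsup : (⨆ n : ℕ, L (n + 1)) < 1)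
    (l : ℕ → ℝ → ℝ)
    (hl_lip : ∀ n : ℕ, ∀ u ∈ Icc (x 0) b, ∀ v ∈ Icc (x 0) b,
      |l (n + 1) u - l (n + 1) v| ≤ L (n + 1) * |u - v|)
    (hl_inj : ∀ n : ℕ, InjOn (l (n + 1)) (Icc (x 0) b))
    (hl_image : ∀ n : ℕ, l (n + 1) '' Icc (x 0) b = Icc (x n) (x (n + 1)))
    (hl_a : ∀ n : ℕ, l (n + 1) (x 0) = x n) (hl_b : ∀ n : ℕ, l (n + 1) b = x (n + 1))
    (W : ℕ → ℝ → Y → Y)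
    (hW_cont : ∀ n : ℕ, ContinuousOn (fun p : ℝ × Y => W (n + 1) p.1 p.2)
      (Icc (x 0) b ×ˢ (univ : Set Y)))
    (hW_a : ∀ n : ℕ, W (n + 1) (x 0) (y 0) = y n)
    (hW_b : ∀ n : ℕ, W (n + 1) b M = y (n + 1))
    (hW_diam : Tendsto (fun n : ℕ =>
      Metric.diam ((fun p : ℝ × Y => W (n + 1) p.1 p.2) ''
        (Icc (x 0) b ×ˢ (univ : Set Y)))) atTop (nhds 0))
    (Lc : ℝ) (hLc : 0 < Lc)
    (φ : ℝ → ℝ) (hφ0 : ∀ t : ℝ, 0 ≤ t → 0 ≤ φ t)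
    (hφmono : ∀ s t : ℝ, 0 ≤ s → s ≤ t → φ s ≤ φ t)
    (hφlt : ∀ t : ℝ, 0 < t → φ t / t < 1)
    (hφanti : ∀ s t : ℝ, 0 < s → s ≤ t → φ t / t ≤ φ s / s)
    (hWφ : ∀ n : ℕ, ∀ u ∈ Icc (x 0) b, ∀ v ∈ Icc (x 0) b, ∀ p q : Y,
      dist (W (n + 1) u p) (W (n + 1) v q) ≤ Lc * |u - v| + φ (dist p q))
    :
    let s : ℝ := ⨆ n : ℕ, L (n + 1)
    let θ : ℝ := (1 - s) / (2 * (Lc + 1))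
    let ψ : ℝ → ℝ := fun t => t * max (s + θ * (Lc + 1)) (φ t / t)
    (0 < θ ∧ θ < 1) ∧
    (∀ t : ℝ, 0 < t → ψ t / t < 1) ∧
    (∀ s' t : ℝ, 0 < s' → s' ≤ t → ψ t / t ≤ ψ s' / s') ∧
    ∀ n : ℕ, ∀ u ∈ Icc (x 0) b, ∀ v ∈ Icc (x 0) b, ∀ p q : Y,
      |l (n + 1) u - l (n + 1) v| + θ * dist (W (n + 1) u p) (W (n + 1) v q) ≤
        ψ (|u - v| + θ * dist p q) := by
  intro s θ ψ
  have hbdd : BddAbove (range fun n : ℕ => L (n + 1)) :=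
    ⟨1, by rintro _ ⟨n, rfl⟩; exact (hL1 n).le⟩
  have hLs : ∀ n : ℕ, L (n + 1) ≤ s := fun n => le_ciSup hbdd n
  have hs0 : 0 ≤ s := (hL0 0).trans (hLs 0)
  have hs1 : s < 1 := hLsup
  have hθ0 : 0 < θ := div_pos (by linarith) (by linarith)
  have hθ1 : θ < 1 := by
    rw [div_lt_one (by linarith)]
    linarith
  have hc : θ * (Lc + 1) = (1 - s) / 2 := by
    simp only [θ]
    field_simp
  have hψ : ∀ t : ℝ, 0 < t → ψ t / t = max (s + θ * (Lc + 1)) (φ t / t) := fun t ht =>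
    mul_div_cancel_left₀ _ ht.ne'
  have hm1 : ∀ t : ℝ, 0 < t → max (s + θ * (Lc + 1)) (φ t / t) < 1 := fun t ht =>
    max_lt (by linarith) (hφlt t ht)
  refine ⟨⟨hθ0, hθ1⟩, fun t ht => (hψ t ht).trans_lt (hm1 t ht), fun r t hr hrt => ?_, ?_⟩
  · rw [hψ t (hr.trans_le hrt), hψ r hr]
    exact max_le_max le_rfl (hφanti r t hr hrt)
  intro n u hu v hv p q
  change _ ≤ (|u - v| + θ * dist p q) *
    max (s + θ * (Lc + 1)) (φ (|u - v| + θ * dist p q) / (|u - v| + θ * dist p q))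
  have hl := hl_lip n u hu v hv
  have hW := mul_le_mul_of_nonneg_left (hWφ n u hu v hv p q) hθ0.le
  have ha : 0 ≤ |u - v| := abs_nonneg _
  have hd : 0 ≤ dist p q := dist_nonneg
  have hLa := mul_le_mul_of_nonneg_right (hLs n) ha
  have hθd : 0 ≤ θ * dist p q := mul_nonneg hθ0.le hd
  rcases (add_nonneg ha hθd).eq_or_lt with h0 | ht
  · -- At distance zero the two points agree, so no information on `φ 0` is needed.
    have huv : u = v := sub_eq_zero.mp (abs_eq_zero.mp (by linarith))
    have hpq : p = q := by
      have : θ * dist p q = 0 := by linarith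
      exact dist_eq_zero.mp ((mul_eq_zero.mp this).resolve_left hθ0.ne')
    subst huv hpq
    simp
  set d := dist p q
  set a := |u - v|
  set t := a + θ * d with ht_def
  have hmlt := hm1 t ht
  set m := max (s + θ * (Lc + 1)) (φ t / t)
  have hcm : s + θ * (Lc + 1) ≤ m := le_max_left _ _
  have hm0 : 0 ≤ m := by linarith
  have hcma := mul_le_mul_of_nonneg_right hcm ha
  have hφm : φ t / t ≤ m := le_max_right _ _
  rcases le_total t d with htd | hdt
  · have hd0 : 0 < d := ht.trans_le htd
    have h1 : φ d ≤ m * d := (div_le_iff₀ hd0).mp ((hφanti t d ht htd).trans hφm)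
    have h2 := mul_le_mul_of_nonneg_left h1 hθ0.le
    have h3 : 0 ≤ θ * a := mul_nonneg hθ0.le ha
    rw [ht_def]
    linarith
  · have h1 : φ d ≤ m * t := (hφmono d t hd hdt).trans ((div_le_iff₀ ht).mp hφm)
    have h2 := mul_le_mul_of_nonneg_left h1 hθ0.le
    have h3 : 0 ≤ θ * a * (1 - m) := mul_nonneg (mul_nonneg hθ0.le ha) (by linarith)
    have h4 : 0 ≤ θ * d * m * (1 - θ) := mul_nonneg (mul_nonneg hθd hm0) (by linarith)
    rw [ht_def] at h2 ⊢
    linarith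
end

section
/- (Remark 3.3) Suppose there exist L > 0 and a non-decreasing function φ : [0,∞) → [0,∞) with φ(t)/t < 1 for all t > 0 and t ↦ φ(t)/t non-increasing on (0,∞), such that d(W_n(x,y), W_n(x',y')) ≤ L|x − x'| + φ(d(y,y')) for all (x,y), (x',y') ∈ [a,b] × Y and all n ≥ 1. Then the countable iterated function system S = (([a,b] × Y, d_θ), (f_n)_{n≥1}) has an attractor: there exists a unique nonempty compact set A_S ⊆ [a,b] × Y such that the closure of ∪_{n≥1} f_n(A_S) equals A_S; moreover, for every nonempty compact K ⊆ [a,b] × Y the iterates F_S^{[k]}(K) converge to A_S in the Hausdorff metric, where F_S(K) is the closure of ∪_{n≥1} f_n(K). -/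
/-!
The metric `ρ` with `ρ p q = |p.1 - q.1| + θ * dist p.2 q.2` is equivalent to the product metric, and
for small `θ` all the maps `f_n` contract it uniformly on `S` at every scale: for each `ε > 0` there is
`γ < 1` such that `ρ p q < η` implies `ρ (f_n p) (f_n q) < γ * η` for all `η ≥ ε` and all `n`
(`scale_contraction`; the monotonicity of `φ t / t` is what makes `γ` uniform).
This passes to the set operator `F = hutch f` (`within_step`), so for any two nonempty subsets `P`,
`Q` of the compact set `S`, which every `f_n` maps into itself, the iterates `F^[k] P` and `F^[k] Q`
become arbitrarily close, uniformly in `P` and `Q` (`iterates_close`).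

The attractor is `A = ⋂ k, F^[k] S`, a decreasing intersection of nonempty compact sets. Monotonicity
gives `F A ⊆ A`. Conversely `A ⊆ F^[k] S`, which is close to `F^[k] A ⊆ F A`, and `F A` is closed, so
`A ⊆ F A`. Uniqueness and convergence follow by comparing `F^[k] K` with `F^[k] A = A`.
-/

open Set Filter Metric

/-- The Hutchinson operator of a countable family of maps: the closure of the union of the images. -/
def hutch {X : Type*} [TopologicalSpace X] (f : ℕ → X → X) (K : Set X) : Set X :=
  closure (⋃ n, f n '' K)

/-- Every point of `P` is at `ρ`-distance less than `η` from some point of `Q`; this is one half of a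
bound on the Hausdorff distance for the distance function `ρ`. -/
def Within {X : Type*} (ρ : X → X → ℝ) (P Q : Set X) (η : ℝ) : Prop :=
  ∀ p ∈ P, ∃ q ∈ Q, ρ p q < η

section Hutchinson

variable {X : Type*} [MetricSpace X] {f : ℕ → X → X} {S : Set X} {ρ : X → X → ℝ}

lemma hutch_mono {P Q : Set X} (h : P ⊆ Q) : hutch f P ⊆ hutch f Q :=
  closure_mono (iUnion_mono fun _ => image_mono h)

lemma hutch_subset (hS : IsCompact S) (hf : ∀ n, ∀ p ∈ S, f n p ∈ S) {P : Set X} (h : P ⊆ S) :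
    hutch f P ⊆ S := by
  refine closure_minimal (iUnion_subset fun n => ?_) hS.isClosed
  rintro _ ⟨p, hp, rfl⟩
  exact hf n p (h hp)

lemma hutch_nonempty {P : Set X} (h : P.Nonempty) : (hutch f P).Nonempty := by
  obtain ⟨p, hp⟩ := h
  exact ⟨f 0 p, subset_closure (mem_iUnion.2 ⟨0, p, hp, rfl⟩)⟩

lemma iter_subset (hS : IsCompact S) (hf : ∀ n, ∀ p ∈ S, f n p ∈ S) {P : Set X} (h : P ⊆ S)
    (k : ℕ) : (hutch f)^[k] P ⊆ S := by
  induction k with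
  | zero => exact h
  | succ k ih => rw [Function.iterate_succ_apply']; exact hutch_subset hS hf ih

lemma iter_nonempty {P : Set X} (h : P.Nonempty) (k : ℕ) : ((hutch f)^[k] P).Nonempty := by
  induction k with
  | zero => exact h
  | succ k ih => rw [Function.iterate_succ_apply']; exact hutch_nonempty ih

/-- Contraction of the maps `f n` at scale `η` passes to the Hutchinson operator: taking closures
costs nothing, since the inequalities are strict. -/
lemma within_step {C γ η : ℝ} (hC : 0 < C)
    (htri : ∀ p q r, ρ p r ≤ ρ p q + ρ q r) (hρ : ∀ p q, ρ p q ≤ C * dist p q)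
    {γ' : ℝ} (hγ : γ * η < γ' * η)
    (hcon : ∀ n, ∀ p ∈ S, ∀ q ∈ S, ρ p q < η → ρ (f n p) (f n q) < γ * η)
    {P Q : Set X} (hP : P ⊆ S) (hQ : Q ⊆ S) (h : Within ρ P Q η) :
    Within ρ (hutch f P) (hutch f Q) (γ' * η) := by
  intro z hz
  obtain ⟨w, hw, hzw⟩ := Metric.mem_closure_iff.1 hz ((γ' * η - γ * η) / C)
    (div_pos (by linarith) hC)
  obtain ⟨n, p, hp, rfl⟩ := mem_iUnion.1 hw
  obtain ⟨q, hq, hpq⟩ := h p hp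
  refine ⟨f n q, subset_closure (mem_iUnion.2 ⟨n, q, hq, rfl⟩), ?_⟩
  have h1 := hcon n p (hP hp) q (hQ hq) hpq
  have h2 := htri z (f n p) (f n q)
  have h3 := hρ z (f n p)
  have h4 : C * dist z (f n p) < γ' * η - γ * η := by
    rw [lt_div_iff₀ hC] at hzw
    linarith
  linarith

/-- Iterates of the Hutchinson operator forget the initial set, uniformly: while the current scale
`η` is at least `ε` it shrinks by a fixed factor, hence it drops to `ε` in a number of steps that
depends only on `ε`. -/
lemma iterates_close {C : ℝ} (hC : 0 < C) (hS : IsCompact S) (hf : ∀ n, ∀ p ∈ S, f n p ∈ S)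
    (htri : ∀ p q r, ρ p r ≤ ρ p q + ρ q r)
    (hρ : ∀ p q, ρ p q ≤ C * dist p q) (hρ' : ∀ p q, dist p q ≤ C * ρ p q)
    (hcon : ∀ ε > 0, ∃ γ : ℝ, 0 < γ ∧ γ < 1 ∧ ∀ η, ε ≤ η → ∀ n, ∀ p ∈ S, ∀ q ∈ S, ρ p q < η →
      ρ (f n p) (f n q) < γ * η) (ε : ℝ) (hε : 0 < ε) :
    ∃ N, ∀ k ≥ N, ∀ P Q : Set X, P ⊆ S → Q ⊆ S → Q.Nonempty →
      ∀ z ∈ (hutch f)^[k] P, ∃ w ∈ (hutch f)^[k] Q, dist z w < ε := by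
  set e := ε / C with he
  have he0 : 0 < e := div_pos hε hC
  obtain ⟨γ, h0, h1, hc⟩ := hcon e he0
  obtain ⟨B, hB⟩ := Metric.isBounded_iff.1 hS.isBounded
  set g := (1 + γ) / 2 with hg
  have hg0 : 0 < g := by linarith
  have hg1 : g < 1 := by linarith
  have key : ∀ P Q : Set X, P ⊆ S → Q ⊆ S → Q.Nonempty → ∀ k,
      Within ρ ((hutch f)^[k] P) ((hutch f)^[k] Q) (max e (g ^ k * (C * B + 1))) := by
    intro P Q hP hQ hQn k
    induction k with
    | zero =>
      intro p hp
      obtain ⟨q, hq⟩ := hQn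
      refine ⟨q, hq, lt_max_of_lt_right ?_⟩
      have h2 := hρ p q
      have h3 := mul_le_mul_of_nonneg_left (hB (hP hp) (hQ hq)) hC.le
      simp only [pow_zero, one_mul]
      linarith
    | succ k ih =>
      rw [Function.iterate_succ_apply', Function.iterate_succ_apply']
      set η := max e (g ^ k * (C * B + 1)) with hη
      have hη0 : e ≤ η := le_max_left _ _
      have hstep := within_step (γ := γ) (γ' := g) hC htri hρ
        (mul_lt_mul_of_pos_right (by linarith) (by linarith)) (hc η hη0)
        (iter_subset hS hf hP k) (iter_subset hS hf hQ k) ih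
      intro p hp
      obtain ⟨q, hq, hpq⟩ := hstep p hp
      refine ⟨q, hq, hpq.trans_le ?_⟩
      rw [hη, mul_max_of_nonneg _ _ hg0.le]
      refine max_le_max ?_ (le_of_eq (by ring))
      nlinarith
  have hlim : Tendsto (fun k : ℕ => g ^ k * (C * B + 1)) atTop (nhds 0) := by
    simpa using (tendsto_pow_atTop_nhds_zero_of_lt_one hg0.le hg1).mul_const (C * B + 1)
  obtain ⟨N, hN⟩ := eventually_atTop.1 (hlim.eventually_lt_const he0)
  refine ⟨N, fun k hk P Q hP hQ hQn z hz => ?_⟩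
  obtain ⟨w, hw, hzw⟩ := key P Q hP hQ hQn k z hz
  rw [max_eq_left (hN k hk).le] at hzw
  refine ⟨w, hw, (hρ' z w).trans_lt ?_⟩
  have := mul_lt_mul_of_pos_left hzw hC
  rwa [he, mul_div_cancel₀ _ hC.ne'] at this

/-- Existence, uniqueness and global attraction for the Hutchinson operator, once its iterates forget
the initial set. No completeness of the hyperspace is used: the attractor is `⋂ k, F^[k] S`. -/
lemma exists_attractor (hS : IsCompact S) (hSn : S.Nonempty) (hf : ∀ n, ∀ p ∈ S, f n p ∈ S)
    (hclose : ∀ ε > 0, ∃ N, ∀ k ≥ N, ∀ P Q : Set X, P ⊆ S → Q ⊆ S → Q.Nonempty →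
      ∀ z ∈ (hutch f)^[k] P, ∃ w ∈ (hutch f)^[k] Q, dist z w < ε) :
    ∃ A : Set X, (A ⊆ S ∧ A.Nonempty ∧ IsCompact A ∧ hutch f A = A) ∧
      (∀ A' : Set X, A' ⊆ S → A'.Nonempty → IsCompact A' → hutch f A' = A' → A' = A) ∧
      ∀ K : Set X, K ⊆ S → K.Nonempty → IsCompact K →
        Tendsto (fun k : ℕ => Metric.hausdorffDist ((hutch f)^[k] K) A) atTop (nhds 0) := by
  have hdec : ∀ k, (hutch f)^[k + 1] S ⊆ (hutch f)^[k] S := by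
    intro k
    induction k with
    | zero => exact hutch_subset hS hf Subset.rfl
    | succ k ih =>
      have h := hutch_mono (f := f) ih
      rwa [← Function.iterate_succ_apply' (hutch f), ← Function.iterate_succ_apply' (hutch f)] at h
  have hcl : ∀ k, IsClosed ((hutch f)^[k] S) := by
    intro k
    cases k with
    | zero => exact hS.isClosed
    | succ k => rw [Function.iterate_succ_apply']; exact isClosed_closure
  set A := ⋂ k, (hutch f)^[k] S with hA
  have hAS : A ⊆ S := iInter_subset _ 0
  have hAn : A.Nonempty := IsCompact.nonempty_iInter_of_sequence_nonempty_isCompact_isClosed _ hdec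
    (iter_nonempty hSn) hS hcl
  have hAc : IsCompact A := hS.of_isClosed_subset (isClosed_iInter hcl) hAS
  have hFA : hutch f A ⊆ A := by
    refine subset_iInter fun k => ?_
    refine Subset.trans ?_ (hdec k)
    rw [Function.iterate_succ_apply']
    exact hutch_mono (iInter_subset _ k)
  have hitA : ∀ k, (hutch f)^[k + 1] A ⊆ hutch f A := by
    intro k
    induction k with
    | zero => exact Subset.rfl
    | succ k ih => rw [Function.iterate_succ_apply']; exact hutch_mono (ih.trans hFA)
  have hfix : hutch f A = A := by
    refine hFA.antisymm fun z hz => ?_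
    have : z ∈ closure (hutch f A) := by
      refine Metric.mem_closure_iff.2 fun ε hε => ?_
      obtain ⟨N, hN⟩ := hclose ε hε
      obtain ⟨w, hw, hzw⟩ := hN (N + 1) (by omega) S A Subset.rfl hAS hAn z
        (mem_iInter.1 hz (N + 1))
      exact ⟨w, hitA N hw, hzw⟩
    exact (isClosed_closure : IsClosed (hutch f A)).closure_subset this
  have hle : ∀ P Q : Set X, P ⊆ S → Q ⊆ S → Q.Nonempty → IsClosed Q →
      hutch f P = P → hutch f Q = Q → P ⊆ Q := by
    intro P Q hP hQ hQn hQc hPf hQf z hz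
    rw [← hQc.closure_eq]
    refine Metric.mem_closure_iff.2 fun ε hε => ?_
    obtain ⟨N, hN⟩ := hclose ε hε
    have := hN N le_rfl P Q hP hQ hQn z
    rw [Function.iterate_fixed hPf, Function.iterate_fixed hQf] at this
    exact this hz
  refine ⟨A, ⟨hAS, hAn, hAc, hfix⟩, fun A' h1 h2 h3 h4 => ?_, fun K hK hKn _ => ?_⟩
  · exact (hle A' A h1 hAS hAn hAc.isClosed h4 hfix).antisymm
      (hle A A' hAS h1 h2 h3.isClosed hfix h4)
  · refine Metric.tendsto_atTop.2 fun ε hε => ?_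
    obtain ⟨N, hN⟩ := hclose (ε / 2) (by linarith)
    refine ⟨N, fun k hk => ?_⟩
    have h1 := hN k hk K A hK hAS hAn
    have h2 := hN k hk A K hAS hK hKn
    rw [Function.iterate_fixed hfix] at h1 h2
    rw [Real.dist_0_eq_abs, abs_of_nonneg Metric.hausdorffDist_nonneg]
    refine (Metric.hausdorffDist_le_of_mem_dist (by linarith : (0 : ℝ) ≤ ε / 2)
      (fun z hz => ?_) (fun z hz => ?_)).trans_lt (by linarith)
    · obtain ⟨w, hw, h⟩ := h1 z hz
      exact ⟨w, hw, h.le⟩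
    · obtain ⟨w, hw, h⟩ := h2 z hz
      exact ⟨w, hw, h.le⟩

end Hutchinson

/-- The scalar estimate behind the contraction at scale `η`, where `s` and `t` stand for the distances
of the two coordinates. If `θ * t ≥ η / 2`, then `φ t ≤ r * t` with `r = φ t₀ / t₀ < 1` and
`t₀ = ε / (2 * θ)`, as `φ t / t` is non-increasing. Otherwise `φ t ≤ t` gives
`lam * s + θ * φ t ≤ lam * (s + θ * t) + (1 - lam) * (θ * t) < (1 + lam) / 2 * η`. -/
lemma scale_contraction {φ : ℝ → ℝ}
    (hφmono : ∀ s t : ℝ, 0 ≤ s → s ≤ t → φ s ≤ φ t)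
    (hφlt : ∀ t : ℝ, 0 < t → φ t / t < 1)
    (hφanti : ∀ s t : ℝ, 0 < s → s ≤ t → φ t / t ≤ φ s / s)
    {θ lam : ℝ} (hθ : 0 < θ) (hl0 : 0 ≤ lam) (hl1 : lam < 1) (ε : ℝ) (hε : 0 < ε) :
    ∃ γ : ℝ, 0 < γ ∧ γ < 1 ∧ ∀ η, ε ≤ η → ∀ s t : ℝ, 0 ≤ s → 0 ≤ t → s + θ * t < η →
      lam * s + θ * φ t < γ * η := by
  have ht0 : 0 < ε / (2 * θ) := by positivity
  set r := φ (ε / (2 * θ)) / (ε / (2 * θ)) with hr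
  have hr1 : r < 1 := hφlt _ ht0
  have hφle : ∀ t, 0 < t → φ t ≤ t := fun t ht => by
    have := hφlt t ht
    rw [div_lt_one ht] at this
    exact this.le
  have hφle' : ∀ t, 0 ≤ t → φ t ≤ t := by
    intro t ht
    rcases ht.eq_or_lt with rfl | ht
    · -- `φ 0 ≤ φ u ≤ u` for every `u > 0`
      exact le_of_forall_pos_le_add fun u hu => by
        linarith [hφmono 0 u le_rfl hu.le, hφle u hu]
    · exact hφle t ht
  refine ⟨max r ((1 + lam) / 2), lt_max_of_lt_right (by linarith),
    max_lt hr1 (by linarith), fun η hη s t hs ht hst => ?_⟩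
  set γ := max r ((1 + lam) / 2) with hγ
  have hγr : r ≤ γ := le_max_left _ _
  have hγl : (1 + lam) / 2 ≤ γ := le_max_right _ _
  rcases le_or_gt (η / 2) (θ * t) with h | h
  · have htt : ε / (2 * θ) ≤ t := by
      rw [div_le_iff₀ (by positivity)]
      nlinarith
    have htp : 0 < t := ht0.trans_le htt
    have h1 : φ t ≤ r * t := by
      rw [← div_le_iff₀ htp]
      exact hφanti _ _ ht0 htt
    have h2 : φ t ≤ γ * t := h1.trans (mul_le_mul_of_nonneg_right hγr ht)
    have h3 : θ * φ t ≤ θ * (γ * t) := mul_le_mul_of_nonneg_left h2 hθ.le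
    have h4 : lam * s ≤ γ * s := mul_le_mul_of_nonneg_right (by linarith) hs
    have h5 : γ * (s + θ * t) < γ * η := mul_lt_mul_of_pos_left hst (by linarith)
    linarith
  · have h1 : θ * φ t ≤ θ * t := mul_le_mul_of_nonneg_left (hφle' t ht) hθ.le
    have h2 : lam * (s + θ * t) ≤ lam * η := mul_le_mul_of_nonneg_left hst.le hl0
    have h3 : (1 - lam) * (θ * t) < (1 - lam) * (η / 2) :=
      mul_lt_mul_of_pos_left h (by linarith)
    have h4 : (1 + lam) / 2 * η ≤ γ * η := mul_le_mul_of_nonneg_right hγl (by linarith)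
    linarith

theorem CIFS_has_attractor
    {Y : Type*} [MetricSpace Y] [CompactSpace Y]
    (x : ℕ → ℝ) (hx : StrictMono x) (b : ℝ) (hxb : Tendsto x atTop (nhds b))
    (y : ℕ → Y) (M : Y) (hyM : Tendsto y atTop (nhds M))
    (L : ℕ → ℝ) (hL0 : ∀ n : ℕ, 0 ≤ L (n + 1)) (hL1 : ∀ n : ℕ, L (n + 1) < 1)
    (hLsup : (⨆ n : ℕ, L (n + 1)) < 1)
    (l : ℕ → ℝ → ℝ)
    (hl_lip : ∀ n : ℕ, ∀ u ∈ Icc (x 0) b, ∀ v ∈ Icc (x 0) b,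
      |l (n + 1) u - l (n + 1) v| ≤ L (n + 1) * |u - v|)
    (hl_inj : ∀ n : ℕ, InjOn (l (n + 1)) (Icc (x 0) b))
    (hl_image : ∀ n : ℕ, l (n + 1) '' Icc (x 0) b = Icc (x n) (x (n + 1)))
    (hl_a : ∀ n : ℕ, l (n + 1) (x 0) = x n) (hl_b : ∀ n : ℕ, l (n + 1) b = x (n + 1))
    (W : ℕ → ℝ → Y → Y)
    (hW_cont : ∀ n : ℕ, ContinuousOn (fun p : ℝ × Y => W (n + 1) p.1 p.2)
      (Icc (x 0) b ×ˢ (univ : Set Y)))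
    (hW_a : ∀ n : ℕ, W (n + 1) (x 0) (y 0) = y n)
    (hW_b : ∀ n : ℕ, W (n + 1) b M = y (n + 1))
    (hW_diam : Tendsto (fun n : ℕ =>
      Metric.diam ((fun p : ℝ × Y => W (n + 1) p.1 p.2) ''
        (Icc (x 0) b ×ˢ (univ : Set Y)))) atTop (nhds 0))
    (Lc : ℝ) (hLc : 0 < Lc)
    (φ : ℝ → ℝ) (hφ0 : ∀ t : ℝ, 0 ≤ t → 0 ≤ φ t)
    (hφmono : ∀ s t : ℝ, 0 ≤ s → s ≤ t → φ s ≤ φ t)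
    (hφlt : ∀ t : ℝ, 0 < t → φ t / t < 1)
    (hφanti : ∀ s t : ℝ, 0 < s → s ≤ t → φ t / t ≤ φ s / s)
    (hWφ : ∀ n : ℕ, ∀ u ∈ Icc (x 0) b, ∀ v ∈ Icc (x 0) b, ∀ p q : Y,
      dist (W (n + 1) u p) (W (n + 1) v q) ≤ Lc * |u - v| + φ (dist p q))
    :
    let S : Set (ℝ × Y) := Icc (x 0) b ×ˢ (univ : Set Y)
    let FS : Set (ℝ × Y) → Set (ℝ × Y) := fun K =>
      closure (⋃ n : ℕ, (fun p : ℝ × Y => (l (n + 1) p.1, W (n + 1) p.1 p.2)) '' K)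
    ∃ A : Set (ℝ × Y),
      (A ⊆ S ∧ A.Nonempty ∧ IsCompact A ∧ FS A = A) ∧
      (∀ A' : Set (ℝ × Y), A' ⊆ S → A'.Nonempty → IsCompact A' → FS A' = A' → A' = A) ∧
      ∀ K : Set (ℝ × Y), K ⊆ S → K.Nonempty → IsCompact K →
        Tendsto (fun k : ℕ => Metric.hausdorffDist (FS^[k] K) A) atTop (nhds 0) := by
  intro S FS
  have hxlb : ∀ n, x n ≤ b := hx.monotone.ge_of_tendsto hxb
  set c := ⨆ n : ℕ, L (n + 1) with hc
  have hLc' : ∀ n, L (n + 1) ≤ c := fun n =>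
    le_ciSup (f := fun n : ℕ => L (n + 1)) ⟨1, by rintro _ ⟨n, rfl⟩; exact (hL1 n).le⟩ n
  have hc0 : 0 ≤ c := (hL0 0).trans (hLc' 0)
  set θ := (1 - c) / (2 * (Lc + 1)) with hθ
  have hθ0 : 0 < θ := div_pos (by linarith) (by linarith)
  have hθL : c + θ * Lc < 1 := by
    have : θ * (2 * (Lc + 1)) = 1 - c := div_mul_cancel₀ _ (by positivity)
    nlinarith
  have hS : IsCompact S := isCompact_Icc.prod isCompact_univ
  have hSn : S.Nonempty := ⟨(x 0, M), ⟨⟨le_rfl, hxlb 0⟩, mem_univ _⟩⟩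
  let f : ℕ → ℝ × Y → ℝ × Y := fun n p => (l (n + 1) p.1, W (n + 1) p.1 p.2)
  have hf : ∀ n, ∀ p ∈ S, f n p ∈ S := by
    intro n p hp
    have h : l (n + 1) p.1 ∈ Icc (x n) (x (n + 1)) := hl_image n ▸ mem_image_of_mem _ hp.1
    exact ⟨⟨(hx.monotone (Nat.zero_le n)).trans h.1, h.2.trans (hxlb _)⟩, mem_univ _⟩
  let ρ : ℝ × Y → ℝ × Y → ℝ := fun p q => |p.1 - q.1| + θ * dist p.2 q.2
  -- one constant serves for both comparisons between `ρ` and the product metric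
  have hC : 0 < 1 + θ + 1 / θ := by positivity
  refine exists_attractor (f := f) hS hSn hf
    (iterates_close (ρ := ρ) hC hS hf ?_ ?_ ?_ ?_)
  · intro p q r
    have h1 := abs_sub_le p.1 q.1 r.1
    have h2 := mul_le_mul_of_nonneg_left (dist_triangle p.2 q.2 r.2) hθ0.le
    simp only [ρ]
    linarith
  · intro p q
    have h1 : |p.1 - q.1| ≤ dist p q := by
      rw [← Real.dist_eq, Prod.dist_eq]; exact le_max_left _ _
    have h2 : dist p.2 q.2 ≤ dist p q := by
      rw [Prod.dist_eq]; exact le_max_right _ _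
    have h3 := mul_le_mul_of_nonneg_left h2 hθ0.le
    have h4 : 0 ≤ 1 / θ * dist p q := by positivity
    simp only [ρ]
    linarith
  · intro p q
    have h1 : 0 ≤ |p.1 - q.1| := abs_nonneg _
    have h2 : 0 ≤ dist p.2 q.2 := dist_nonneg
    have h3 : (1 + θ + 1 / θ) * (|p.1 - q.1| + θ * dist p.2 q.2)
        = |p.1 - q.1| + dist p.2 q.2 + (θ + 1 / θ) * |p.1 - q.1|
          + (1 + θ) * θ * dist p.2 q.2 := by
      field_simp
      ring
    have h4 : 0 ≤ (θ + 1 / θ) * |p.1 - q.1| := by positivity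
    have h5 : 0 ≤ (1 + θ) * θ * dist p.2 q.2 := by positivity
    simp only [ρ]
    rw [h3, Prod.dist_eq, Real.dist_eq]
    exact max_le (by linarith) (by linarith)
  · intro ε hε
    obtain ⟨γ, h0, h1, h⟩ := scale_contraction hφmono hφlt hφanti hθ0
      (by positivity : 0 ≤ c + θ * Lc) hθL ε hε
    refine ⟨γ, h0, h1, fun η hη n p hp q hq hpq => lt_of_le_of_lt ?_
      (h η hη _ _ (abs_nonneg _) dist_nonneg hpq)⟩
    have h2 := hl_lip n p.1 hp.1 q.1 hq.1
    have h3 := mul_le_mul_of_nonneg_right (hLc' n) (abs_nonneg (p.1 - q.1))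
    have h4 := mul_le_mul_of_nonneg_left (hWφ n p.1 hp.1 q.1 hq.1 p.2 q.2) hθ0.le
    simp only [ρ, f]
    linarith
end

section
/- (Theorem 3.4) Suppose there exist L > 0 and a non-decreasing function φ : [0,∞) → [0,∞) with φ(t)/t < 1 for all t > 0 and t ↦ φ(t)/t non-increasing on (0,∞), such that d(W_n(x,y), W_n(x',y')) ≤ L|x − x'| + φ(d(y,y')) for all (x,y), (x',y') ∈ [a,b] × Y and all n ≥ 1. Then there exists a continuous function f_* : [a,b] → Y with f_*(x_n) = y_n for every n ≥ 0 (an interpolation function corresponding to Δ), such that the graph G = {(x, f_*(x)) : x ∈ [a,b]} is the attractor of the countable iterated function system S = (([a,b] × Y, d_θ), (f_n)_{n≥1}); that is, G is the unique nonempty compact subset of [a,b] × Y satisfying closure(∪_{n≥1} f_n(G)) = G. -/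
/-!
The attractor is produced first, and the interpolation function is read off from it.

Write `F A = closure (⋃ n, fₙ '' A)` on subsets of `X = [a, b] × Y`. It is monotone, so
Knaster–Tarski gives a greatest fixed point `K`, which is closed, and nonempty because `(a, y₀)` is
fixed by the first map. Everything else holds for every nonempty compact fixed set `A` of `F`:

* since the sets `fₙ(X)` shrink to `(b, M)`, each point of `A` other than `(b, M)` lies in some
  `fₙ '' A` (`closure_iUnion_subset`);
* `A` has at most one point over each `t`: the fibres over `a` and `b` are `{y₀}` and `{M}`, so two
  points over the same `t` either agree (at a node) or come, under the same `fₙ`, from two points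
  over a common parameter, and their distance is at most `φ` of the distance of these;
* `A` has a point over each `t`, since the distance from `t` to the projection of `A` is at most
  `sup L` times such a distance.

The last two items use the same fact (`eq_zero_of_le_comparison`): a bounded set of nonnegative
numbers, each of which is zero or at most `φ` of another one, is `{0}`. Thus `K` is the graph of a
function, continuous because its graph is compact. If `A` is another fixed set then `A ∪ K` is
again fixed, hence has one-point fibres, which forces `A = K`.
-/

open Set Filter Metric

/-- For a comparison function `φ`, a bounded set of nonnegative reals, each of whose elements is
zero or at most `φ` of some element, contains no positive number. -/
lemma eq_zero_of_le_comparison (φ : ℝ → ℝ)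
    (hφmono : ∀ s t : ℝ, 0 ≤ s → s ≤ t → φ s ≤ φ t)
    (hφlt : ∀ t : ℝ, 0 < t → φ t / t < 1)
    (hφanti : ∀ s t : ℝ, 0 < s → s ≤ t → φ t / t ≤ φ s / s)
    (S : Set ℝ) (hS0 : ∀ s ∈ S, 0 ≤ s) (hSb : BddAbove S)
    (h : ∀ s ∈ S, s = 0 ∨ ∃ s' ∈ S, s ≤ φ s') : ∀ s ∈ S, s = 0 := by
  intro s hs
  by_contra hne
  have hspos : 0 < s := lt_of_le_of_ne (hS0 s hs) (Ne.symm hne)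
  set σ := sSup S with hσ
  have hσpos : 0 < σ := lt_of_lt_of_le hspos (le_csSup hSb hs)
  -- `c` is a contraction factor for `φ` on `[σ / 2, ∞)`.
  set c := max 0 (φ (σ / 2) / (σ / 2)) with hc
  have hc0 : 0 ≤ c := le_max_left _ _
  have hc1 : c < 1 := max_lt one_pos (hφlt _ (by positivity))
  have hle : σ ≤ c * σ := by
    refine csSup_le ⟨s, hs⟩ fun r hr => ?_
    rcases h r hr with h0 | ⟨r', hr', hrr⟩
    · rw [h0]; positivity
    refine hrr.trans ?_
    rcases le_total (σ / 2) r' with h1 | h1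
    · have hpos : 0 < r' := lt_of_lt_of_le (by positivity) h1
      have h2 : φ r' / r' ≤ c := (hφanti _ _ (by positivity) h1).trans (le_max_right _ _)
      have h3 : φ r' ≤ c * r' := (div_le_iff₀ hpos).1 h2
      exact h3.trans (mul_le_mul_of_nonneg_left (le_csSup hSb hr') hc0)
    · have h2 : φ (σ / 2) ≤ c * (σ / 2) := (div_le_iff₀ (by positivity)).1 (le_max_right _ _)
      have h3 := hφmono _ _ (hS0 _ hr') h1
      nlinarith
  nlinarith

/-- The union of a sequence of compact sets shrinking to `p` acquires at most the point `p` in its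
closure. -/
lemma closure_iUnion_subset {Z : Type*} [MetricSpace Z] (C : ℕ → Set Z) (p : Z)
    (hC : ∀ n, IsCompact (C n))
    (hsmall : ∀ ε > 0, ∀ᶠ n in atTop, C n ⊆ closedBall p ε) :
    closure (⋃ n, C n) ⊆ (⋃ n, C n) ∪ {p} := by
  intro z hz
  by_cases hzp : z = p
  · exact Or.inr hzp
  left
  have hd : 0 < dist z p := dist_pos.2 hzp
  obtain ⟨N, hN⟩ := eventually_atTop.1 (hsmall (dist z p / 2) (by positivity))
  have hsub : (⋃ n, C n) ⊆ (⋃ n ∈ Iio N, C n) ∪ closedBall p (dist z p / 2) := by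
    refine iUnion_subset fun n => ?_
    rcases lt_or_ge n N with h | h
    · exact (subset_biUnion_of_mem (u := C) (show n ∈ Iio N from h)).trans subset_union_left
    · exact (hN n h).trans subset_union_right
  have hcl : IsClosed ((⋃ n ∈ Iio N, C n) ∪ closedBall p (dist z p / 2)) :=
    ((finite_Iio N).isClosed_biUnion fun n _ => (hC n).isClosed).union isClosed_closedBall
  rcases closure_minimal hsub hcl hz with h | h
  · obtain ⟨n, -, hn⟩ := mem_iUnion₂.1 h
    exact mem_iUnion.2 ⟨n, hn⟩
  · rw [mem_closedBall] at h
    linarith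

/-- The intervals between consecutive nodes cover `[x 0, b)`. -/
lemma exists_mem_node_interval (x : ℕ → ℝ) (b : ℝ) (hxb : Tendsto x atTop (nhds b))
    (t : ℝ) (h0 : x 0 ≤ t) (htb : t < b) : ∃ n, t ∈ Icc (x n) (x (n + 1)) := by
  classical
  have hex : ∃ n, t < x n := (hxb.eventually (lt_mem_nhds htb)).exists
  have hne : Nat.find hex ≠ 0 := fun h => by
    have := Nat.find_spec hex
    rw [h] at this
    linarith
  obtain ⟨k, hk⟩ := Nat.exists_eq_succ_of_ne_zero hne
  refine ⟨k, not_lt.1 (Nat.find_min hex (by omega)), ?_⟩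
  have := Nat.find_spec hex
  rw [hk] at this
  exact this.le

/-- A function into a compact space whose graph over a set is closed is continuous on it. -/
lemma continuousOn_of_isClosed_graph {Y : Type*} [MetricSpace Y] [CompactSpace Y]
    (f : ℝ → Y) (I : Set ℝ) (hG : IsClosed ((fun t : ℝ => (t, f t)) '' I)) :
    ContinuousOn f I := by
  rw [continuousOn_iff_isClosed]
  intro T hT
  refine ⟨Prod.fst '' ((fun t : ℝ => (t, f t)) '' I ∩ Prod.snd ⁻¹' T),
    isClosedMap_fst_of_compactSpace _ (hG.inter (hT.preimage continuous_snd)), ?_⟩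
  ext t
  constructor
  · rintro ⟨h1, h2⟩
    exact ⟨⟨_, ⟨⟨t, h2, rfl⟩, h1⟩, rfl⟩, h2⟩
  · rintro ⟨⟨_, ⟨⟨s, hs, rfl⟩, h1⟩, rfl⟩, h2⟩
    exact ⟨h1, h2⟩

theorem graph_FIF_is_attractor
    {Y : Type*} [MetricSpace Y] [CompactSpace Y]
    (x : ℕ → ℝ) (hx : StrictMono x) (b : ℝ) (hxb : Tendsto x atTop (nhds b))
    (y : ℕ → Y) (M : Y) (hyM : Tendsto y atTop (nhds M))
    (L : ℕ → ℝ) (hL0 : ∀ n : ℕ, 0 ≤ L (n + 1)) (hL1 : ∀ n : ℕ, L (n + 1) < 1)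
    (hLsup : (⨆ n : ℕ, L (n + 1)) < 1)
    (l : ℕ → ℝ → ℝ)
    (hl_lip : ∀ n : ℕ, ∀ u ∈ Icc (x 0) b, ∀ v ∈ Icc (x 0) b,
      |l (n + 1) u - l (n + 1) v| ≤ L (n + 1) * |u - v|)
    (hl_inj : ∀ n : ℕ, InjOn (l (n + 1)) (Icc (x 0) b))
    (hl_image : ∀ n : ℕ, l (n + 1) '' Icc (x 0) b = Icc (x n) (x (n + 1)))
    (hl_a : ∀ n : ℕ, l (n + 1) (x 0) = x n) (hl_b : ∀ n : ℕ, l (n + 1) b = x (n + 1))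
    (W : ℕ → ℝ → Y → Y)
    (hW_cont : ∀ n : ℕ, ContinuousOn (fun p : ℝ × Y => W (n + 1) p.1 p.2)
      (Icc (x 0) b ×ˢ (univ : Set Y)))
    (hW_a : ∀ n : ℕ, W (n + 1) (x 0) (y 0) = y n)
    (hW_b : ∀ n : ℕ, W (n + 1) b M = y (n + 1))
    (hW_diam : Tendsto (fun n : ℕ =>
      Metric.diam ((fun p : ℝ × Y => W (n + 1) p.1 p.2) ''
        (Icc (x 0) b ×ˢ (univ : Set Y)))) atTop (nhds 0))
    (Lc : ℝ) (hLc : 0 < Lc)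
    (φ : ℝ → ℝ) (hφ0 : ∀ t : ℝ, 0 ≤ t → 0 ≤ φ t)
    (hφmono : ∀ s t : ℝ, 0 ≤ s → s ≤ t → φ s ≤ φ t)
    (hφlt : ∀ t : ℝ, 0 < t → φ t / t < 1)
    (hφanti : ∀ s t : ℝ, 0 < s → s ≤ t → φ t / t ≤ φ s / s)
    (hWφ : ∀ n : ℕ, ∀ u ∈ Icc (x 0) b, ∀ v ∈ Icc (x 0) b, ∀ p q : Y,
      dist (W (n + 1) u p) (W (n + 1) v q) ≤ Lc * |u - v| + φ (dist p q))
    :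
    ∃ fs : ℝ → Y, ContinuousOn fs (Icc (x 0) b) ∧ (∀ n : ℕ, fs (x n) = y n) ∧ fs b = M ∧
      (let G : Set (ℝ × Y) := (fun t : ℝ => (t, fs t)) '' Icc (x 0) b
       closure (⋃ n : ℕ, (fun p : ℝ × Y => (l (n + 1) p.1, W (n + 1) p.1 p.2)) '' G) = G ∧
       ∀ A : Set (ℝ × Y), A ⊆ Icc (x 0) b ×ˢ (univ : Set Y) → A.Nonempty → IsCompact A →
         closure (⋃ n : ℕ, (fun p : ℝ × Y => (l (n + 1) p.1, W (n + 1) p.1 p.2)) '' A) = A → A = G) := by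
  have hbn : ∀ n, x n < b := fun n =>
    (hx n.lt_succ_self).trans_le (hx.monotone.ge_of_tendsto hxb (n + 1))
  have haI : x 0 ∈ Icc (x 0) b := ⟨le_rfl, (hbn 0).le⟩
  have hbI : b ∈ Icc (x 0) b := ⟨(hbn 0).le, le_rfl⟩
  have hlI : ∀ n, ∀ u ∈ Icc (x 0) b, l (n + 1) u ∈ Icc (x n) (x (n + 1)) := fun n u hu =>
    hl_image n ▸ mem_image_of_mem _ hu
  set X : Set (ℝ × Y) := Icc (x 0) b ×ˢ (univ : Set Y) with hX
  have hXc : IsCompact X := isCompact_Icc.prod isCompact_univ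
  set f : ℕ → ℝ × Y → ℝ × Y := fun n p => (l (n + 1) p.1, W (n + 1) p.1 p.2) with hf
  have hfX : ∀ n, ∀ p ∈ X, f n p ∈ X := fun n p hp =>
    ⟨⟨(hx.monotone n.zero_le).trans (hlI n _ hp.1).1, (hlI n _ hp.1).2.trans (hbn _).le⟩, trivial⟩
  have hfc : ∀ n, ContinuousOn (f n) X := by
    intro n
    have hl : ContinuousOn (l (n + 1)) (Icc (x 0) b) := by
      refine LipschitzOnWith.continuousOn (K := ⟨L (n + 1), hL0 n⟩) ?_
      refine LipschitzOnWith.of_dist_le_mul fun u hu v hv => ?_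
      rw [Real.dist_eq, Real.dist_eq]
      exact hl_lip n u hu v hv
    exact (hl.comp continuousOn_fst fun p hp => hp.1).prodMk (hW_cont n)
  have hsmall : ∀ ε > 0, ∀ᶠ n in atTop, ∀ p ∈ X, f n p ∈ closedBall (b, M) ε := by
    intro ε hε
    have h1 := hxb.eventually (closedBall_mem_nhds b hε)
    have h2 : ∀ᶠ n in atTop, y (n + 1) ∈ closedBall M (ε / 2) :=
      (tendsto_add_atTop_iff_nat 1).2 hyM (closedBall_mem_nhds M (half_pos hε))
    have h3 := hW_diam.eventually (gt_mem_nhds (half_pos hε))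
    filter_upwards [h1, h2, h3] with n h1 h2 h3 p hp
    rw [mem_closedBall] at h2
    rw [mem_closedBall, Prod.dist_eq, max_le_iff]
    constructor
    · have h4 := (hlI n _ hp.1).1
      have h5 := (hlI n _ hp.1).2.trans (hbn _).le
      rw [Real.dist_eq, abs_le] at h1
      change dist (l (n + 1) p.1) b ≤ ε
      rw [Real.dist_eq, abs_le]
      constructor <;> linarith
    · change dist (W (n + 1) p.1 p.2) M ≤ ε
      have h4 : dist (W (n + 1) p.1 p.2) (W (n + 1) b M) ≤ ε / 2 :=
        (dist_le_diam_of_mem (isBounded_of_compactSpace) (mem_image_of_mem _ hp)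
          (mem_image_of_mem (fun p : ℝ × Y => W (n + 1) p.1 p.2)
            (show (b, M) ∈ X from ⟨hbI, trivial⟩))).trans h3.le
      rw [hW_b] at h4
      linarith [dist_triangle (W (n + 1) p.1 p.2) (y (n + 1)) M]
  have hD : ∃ D : ℝ, ∀ p q : Y, dist p q ≤ D :=
    ⟨diam (univ : Set Y), fun p q =>
      dist_le_diam_of_mem isBounded_of_compactSpace (mem_univ p) (mem_univ q)⟩
  obtain ⟨D, hD⟩ := hD
  have step : ∀ A ⊆ X, IsCompact A → closure (⋃ n, f n '' A) = A →
      ∀ p ∈ A, p = (b, M) ∨ ∃ n, ∃ q ∈ A, f n q = p := by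
    intro A hAX hAc hA p hp
    rw [← hA] at hp
    rcases closure_iUnion_subset (fun n => f n '' A) (b, M)
      (fun n => hAc.image_of_continuousOn ((hfc n).mono hAX))
      (fun ε hε => (hsmall ε hε).mono fun n h => by
        rintro _ ⟨q, hq, rfl⟩
        exact h q (hAX hq)) hp with h | h
    · obtain ⟨n, hn⟩ := mem_iUnion.1 h
      exact Or.inr ⟨n, hn⟩
    · exact Or.inl h
  have memF : ∀ A : Set (ℝ × Y), closure (⋃ n, f n '' A) = A → ∀ n, ∀ p ∈ A, f n p ∈ A :=
    fun A hA n p hp => hA ▸ subset_closure (mem_iUnion.2 ⟨n, mem_image_of_mem _ hp⟩)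
  have memb : ∀ A ⊆ X, A.Nonempty → closure (⋃ n, f n '' A) = A → (b, M) ∈ A := by
    intro A hAX ⟨p, hp⟩ hA
    rw [← hA, Metric.mem_closure_iff]
    intro ε hε
    obtain ⟨n, hn⟩ := (hsmall (ε / 2) (half_pos hε)).exists
    refine ⟨f n p, mem_iUnion.2 ⟨n, mem_image_of_mem _ hp⟩, ?_⟩
    have := hn p (hAX hp)
    rw [mem_closedBall, dist_comm] at this
    linarith
  -- The fibre over `b`: no `fₙ` reaches the abscissa `b`.
  have fib_b : ∀ A ⊆ X, IsCompact A → closure (⋃ n, f n '' A) = A → ∀ q, (b, q) ∈ A → q = M := by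
    intro A hAX hAc hA q hq
    rcases step A hAX hAc hA _ hq with h | ⟨n, r, hr, h⟩
    · exact congrArg Prod.snd h
    · have h1 : l (n + 1) r.1 = b := congrArg Prod.fst h
      have h2 := (hlI n _ (hAX hr).1).2
      linarith [hbn (n + 1)]
  -- The fibre over `x 0`: only the first map reaches it, and from that same fibre.
  have fib_a : ∀ A ⊆ X, IsCompact A → closure (⋃ n, f n '' A) = A →
      ∀ q, (x 0, q) ∈ A → q = y 0 := by
    intro A hAX hAc hA q hq
    refine dist_eq_zero.1 (eq_zero_of_le_comparison φ hφmono hφlt hφanti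
      {s | ∃ q, (x 0, q) ∈ A ∧ s = dist q (y 0)} ?_ ⟨D, ?_⟩ ?_ _ ⟨q, hq, rfl⟩)
    · rintro _ ⟨q, -, rfl⟩
      exact dist_nonneg
    · rintro _ ⟨q, -, rfl⟩
      exact hD _ _
    · rintro _ ⟨q, hq, rfl⟩
      rcases step A hAX hAc hA _ hq with h | ⟨n, ⟨u, r⟩, hr, h⟩
      · exact absurd (congrArg Prod.fst h) (hbn 0).ne
      · have hu : u ∈ Icc (x 0) b := (hAX hr).1
        have h1 : l (n + 1) u = x 0 := congrArg Prod.fst h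
        have h2 : W (n + 1) u r = q := congrArg Prod.snd h
        have h3 := (hlI n u hu).1
        have hn : n = 0 := by
          have : n ≤ 0 := hx.le_iff_le.1 (h1 ▸ h3)
          omega
        subst hn
        have hu0 : u = x 0 := hl_inj 0 hu haI (h1.trans (hl_a 0).symm)
        subst hu0
        refine Or.inr ⟨_, ⟨r, hr, rfl⟩, ?_⟩
        have := hWφ 0 _ haI _ haI r (y 0)
        rwa [h2, hW_a, sub_self, abs_zero, mul_zero, zero_add] at this
  -- Two points reached by different maps over the same abscissa meet at a node.
  have node : ∀ A ⊆ X, IsCompact A → closure (⋃ n, f n '' A) = A →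
      ∀ n m, n < m → ∀ u p v q, (u, p) ∈ A → (v, q) ∈ A → l (n + 1) u = l (m + 1) v →
        W (n + 1) u p = W (m + 1) v q := by
    intro A hAX hAc hA n m hnm u p v q hp hq h
    have hu : u ∈ Icc (x 0) b := (hAX hp).1
    have hv : v ∈ Icc (x 0) b := (hAX hq).1
    have h1 := (hlI n u hu).2
    have h2 := (hlI m v hv).1
    have hm : m = n + 1 := le_antisymm (hx.le_iff_le.1 (by linarith)) hnm
    subst hm
    have hub : u = b := hl_inj n hu hbI (by rw [hl_b]; linarith)
    have hva : v = x 0 := hl_inj (n + 1) hv haI (by rw [hl_a]; linarith)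
    subst hva
    subst hub
    rw [fib_b A hAX hAc hA p hp, fib_a A hAX hAc hA q hq, hW_a, hW_b]
  have fib : ∀ A ⊆ X, IsCompact A → closure (⋃ n, f n '' A) = A →
      ∀ t p q, (t, p) ∈ A → (t, q) ∈ A → p = q := by
    intro A hAX hAc hA t p q hp hq
    refine dist_eq_zero.1 (eq_zero_of_le_comparison φ hφmono hφlt hφanti
      {s | ∃ t p q, (t, p) ∈ A ∧ (t, q) ∈ A ∧ s = dist p q} ?_ ⟨D, ?_⟩ ?_ _
      ⟨t, p, q, hp, hq, rfl⟩)
    · rintro _ ⟨t, p, q, -, -, rfl⟩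
      exact dist_nonneg
    · rintro _ ⟨t, p, q, -, -, rfl⟩
      exact hD _ _
    · rintro _ ⟨t, p, q, hp, hq, rfl⟩
      by_cases htb : t = b
      · subst htb
        left
        rw [fib_b A hAX hAc hA p hp, fib_b A hAX hAc hA q hq, dist_self]
      rcases step A hAX hAc hA _ hp with h | ⟨n, ⟨u, p'⟩, hp', h⟩
      · exact absurd (congrArg Prod.fst h) htb
      rcases step A hAX hAc hA _ hq with h' | ⟨m, ⟨v, q'⟩, hq', h'⟩
      · exact absurd (congrArg Prod.fst h') htb
      have h1 : l (n + 1) u = t := congrArg Prod.fst h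
      have h2 : W (n + 1) u p' = p := congrArg Prod.snd h
      have h3 : l (m + 1) v = t := congrArg Prod.fst h'
      have h4 : W (m + 1) v q' = q := congrArg Prod.snd h'
      rcases lt_trichotomy n m with hnm | hnm | hnm
      · left
        rw [← h2, ← h4, node A hAX hAc hA n m hnm u p' v q' hp' hq' (h1.trans h3.symm), dist_self]
      · subst hnm
        have hu : u ∈ Icc (x 0) b := (hAX hp').1
        have huv : u = v := hl_inj n hu (hAX hq').1 (h1.trans h3.symm)
        subst huv
        refine Or.inr ⟨_, ⟨u, p', q', hp', hq', rfl⟩, ?_⟩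
        have := hWφ n _ hu _ hu p' q'
        rwa [h2, h4, sub_self, abs_zero, mul_zero, zero_add] at this
      · left
        rw [← h2, ← h4, node A hAX hAc hA m n hnm v q' u p' hq' hp' (h3.trans h1.symm), dist_self]
  have full : ∀ A ⊆ X, A.Nonempty → IsCompact A → closure (⋃ n, f n '' A) = A →
      ∀ t ∈ Icc (x 0) b, ∃ q, (t, q) ∈ A := by
    intro A hAX hne hAc hA t ht
    set P : Set ℝ := Prod.fst '' A with hP
    have hPc : IsCompact P := hAc.image continuous_fst
    have hbP : b ∈ P := ⟨_, memb A hAX hne hA, rfl⟩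
    set c : ℝ := ⨆ n : ℕ, L (n + 1) with hc
    have hLc' : ∀ n, L (n + 1) ≤ c := fun n =>
      le_ciSup (f := fun n : ℕ => L (n + 1)) ⟨1, by rintro _ ⟨k, rfl⟩; exact (hL1 k).le⟩ n
    have hc0 : 0 ≤ c := (hL0 0).trans (hLc' 0)
    have hzero : infDist t P = 0 := by
      refine eq_zero_of_le_comparison (fun s => c * s)
        (fun s r _ h => mul_le_mul_of_nonneg_left h hc0)
        (fun s hs => by rwa [mul_div_cancel_right₀ _ hs.ne'])
        (fun s r hs hr => by
          rw [mul_div_cancel_right₀ _ hs.ne', mul_div_cancel_right₀ _ (hs.trans_le hr).ne'])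
        {s | ∃ t ∈ Icc (x 0) b, s = infDist t P} ?_ ⟨b - x 0, ?_⟩ ?_ _ ⟨t, ht, rfl⟩
      · rintro _ ⟨t, -, rfl⟩
        exact infDist_nonneg
      · rintro _ ⟨t, ht, rfl⟩
        refine (infDist_le_dist_of_mem hbP).trans ?_
        rw [Real.dist_eq, abs_le]
        constructor <;> linarith [ht.1, ht.2]
      · rintro _ ⟨t, ht, rfl⟩
        rcases ht.2.eq_or_lt with h | h
        · exact Or.inl (h ▸ infDist_zero_of_mem hbP)
        obtain ⟨n, hn⟩ := exists_mem_node_interval x b hxb t ht.1 h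
        rw [← hl_image n] at hn
        obtain ⟨u, hu, rfl⟩ := hn
        obtain ⟨w, hw, hwd⟩ := hPc.exists_infDist_eq_dist ⟨b, hbP⟩ u
        obtain ⟨r, hr, rfl⟩ := hw
        refine Or.inr ⟨_, ⟨u, hu, rfl⟩, ?_⟩
        calc infDist (l (n + 1) u) P ≤ dist (l (n + 1) u) (l (n + 1) r.1) :=
              infDist_le_dist_of_mem ⟨_, memF A hA n r hr, rfl⟩
          _ ≤ L (n + 1) * dist u r.1 := hl_lip n u hu _ (hAX hr).1
          _ ≤ c * infDist u P := by
              rw [hwd]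
              exact mul_le_mul_of_nonneg_right (hLc' n) dist_nonneg
    have htP : t ∈ P := (hPc.isClosed.mem_iff_infDist_zero ⟨b, hbP⟩).2 hzero
    obtain ⟨⟨t', q⟩, hq, rfl⟩ := htP
    exact ⟨q, hq⟩
  obtain ⟨K, hKX, hKa, hKc, hK⟩ : ∃ K ⊆ X, (x 0, y 0) ∈ K ∧ IsCompact K ∧
      closure (⋃ n, f n '' K) = K := by
    -- Intersecting with `X` makes the operator well behaved on all subsets of `ℝ × Y`.
    let F : Set (ℝ × Y) →o Set (ℝ × Y) :=
      ⟨fun A => closure (⋃ n, f n '' (A ∩ X)), fun A B h =>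
        closure_mono (iUnion_mono fun n => image_mono (inter_subset_inter_left X h))⟩
    have hfix : closure (⋃ n, f n '' (F.gfp ∩ X)) = F.gfp := F.map_gfp
    have hsub : F.gfp ⊆ X := by
      rw [← hfix]
      refine closure_minimal (iUnion_subset fun n => ?_) hXc.isClosed
      rintro _ ⟨p, hp, rfl⟩
      exact hfX n p hp.2
    have ha : ({(x 0, y 0)} : Set (ℝ × Y)) ≤ F.gfp := by
      refine F.le_gfp ?_
      rintro _ rfl
      refine subset_closure (mem_iUnion.2 ⟨0, (x 0, y 0), ⟨rfl, haI, trivial⟩, ?_⟩)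
      exact Prod.ext (hl_a 0) (hW_a 0)
    refine ⟨F.gfp, hsub, ha rfl, hXc.of_isClosed_subset ?_ hsub, ?_⟩
    · rw [← hfix]
      exact isClosed_closure
    · rwa [inter_eq_left.2 hsub] at hfix
  have hKb : (b, M) ∈ K := memb K hKX ⟨_, hKa⟩ hK
  have hKfull := full K hKX ⟨_, hKa⟩ hKc hK
  have hKfib := fib K hKX hKc hK
  have : ∀ t, ∃ q, t ∈ Icc (x 0) b → (t, q) ∈ K := fun t => by
    by_cases ht : t ∈ Icc (x 0) b
    · obtain ⟨q, hq⟩ := hKfull t ht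
      exact ⟨q, fun _ => hq⟩
    · exact ⟨M, fun h => absurd h ht⟩
  choose fs hfs using this
  have hG : (fun t : ℝ => (t, fs t)) '' Icc (x 0) b = K := by
    ext ⟨t, q⟩
    constructor
    · rintro ⟨s, hs, h⟩
      exact h ▸ hfs s hs
    · intro h
      have ht : t ∈ Icc (x 0) b := (hKX h).1
      exact ⟨t, ht, by rw [hKfib t q (fs t) h (hfs t ht)]⟩
  refine ⟨fs, continuousOn_of_isClosed_graph fs _ (hG ▸ hKc.isClosed), fun n => ?_,
    hKfib b _ _ (hfs b hbI) hKb, ?_⟩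
  · refine hKfib (x n) _ _ (hfs _ ⟨hx.monotone n.zero_le, (hbn n).le⟩) ?_
    cases n with
    | zero => exact hKa
    | succ k =>
      have := memF K hK k _ hKb
      simpa only [hf, hl_b, hW_b] using this
  · intro G
    have hGK : G = K := hG
    rw [hGK]
    refine ⟨hK, fun A hAX hAne hAc hA => ?_⟩
    change closure (⋃ n, f n '' A) = A at hA
    have hU : closure (⋃ n, f n '' (A ∪ K)) = A ∪ K := by
      simp only [image_union, iUnion_union_distrib, closure_union, hA, hK]
    have hUfib := fib (A ∪ K) (union_subset hAX hKX) (hAc.union hKc) hU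
    have hAfull := full A hAX hAne hAc hA
    apply Subset.antisymm
    · rintro ⟨t, p⟩ hp
      obtain ⟨q, hq⟩ := hKfull t (hAX hp).1
      rwa [hUfib t p q (Or.inl hp) (Or.inr hq)]
    · rintro ⟨t, p⟩ hp
      obtain ⟨q, hq⟩ := hAfull t (hKX hp).1
      rwa [hUfib t p q (Or.inr hp) (Or.inl hq)]
end

section
/- Suppose there exists a non-decreasing function φ : [0,∞) → [0,∞) with lim_{k→∞} φ^{[k]}(t) = 0 for all t > 0, such that d(W_n(x,y), W_n(x,y')) ≤ φ(d(y,y')) for all x ∈ [a,b], all y, y' ∈ Y and all n ≥ 1. Then the operator T has a unique fixed point f_* in C([a,b]), and f_* is an interpolation function corresponding to Δ: f_*(x_n) = y_n for all n ≥ 0, and f_*(b) = M. -/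
open Set Filter Metric

/-!
The idea is to run a Matkowski-type iteration on *all* functions `f` with `f a = m` and `f b = M`,
not only on the continuous ones. This matters because `Y` need not be path connected, so it is not
known beforehand that `C([a,b])` is nonempty.

Since `Y` is bounded, say by `D > 0`, the `k`-th iterates of any two such functions are within
`φ^[k] D → 0` of each other (`dist_le_iterate`). So the iterates of any starting function are
uniformly Cauchy, and the pointwise limit `fs` satisfies `fs (l_n u) = W_n (u, fs u)`; the same
estimate gives uniqueness.

Continuity of `fs` is obtained afterwards from self-similarity. Say that `f` is `c`-tame at `z` if
near `z` its values are within `c` of points which tend to `f z` (`Tame`). Every function is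
`D`-tame. If `fs` is `c`-tame everywhere then each `W_n` makes it `φ c`-tame within each interval
`[x_{n-1}, x_n]` (`Tame.step`), and finitely many of these cover a neighbourhood of any point
`z < b`. Hence `fs` is `φ^[k] D`-tame for every `k`, that is, continuous. At `b` continuity
follows from `diam (Im W_n) → 0`.
-/

/-- The values of `f` near `z` within `s` are within distance `c` of points tending to `f z`.
Quantifying over nearby points `w`, rather than asking for `dist (f t) (f z) ≤ c + ε`, makes
the notion transform by `c ↦ φ c` even when `φ` is not right-continuous. -/
def Tame {Y : Type*} [MetricSpace Y] (c : ℝ) (f : ℝ → Y) (s : Set ℝ) (z : ℝ) : Prop :=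
  ∀ ε > 0, ∀ᶠ t in nhdsWithin z s, ∃ w, dist w (f z) < ε ∧ dist (f t) w ≤ c

theorem Tame.union {Y : Type*} [MetricSpace Y] {c : ℝ} {f : ℝ → Y} {s t : Set ℝ} {z : ℝ}
    (hs : Tame c f s z) (ht : Tame c f t z) : Tame c f (s ∪ t) z := by
  intro ε hε
  rw [nhdsWithin_union, eventually_sup]
  exact ⟨hs ε hε, ht ε hε⟩

theorem Tame.mono {Y : Type*} [MetricSpace Y] {c : ℝ} {f : ℝ → Y} {s t : Set ℝ} {z : ℝ}
    (h : Tame c f t z) (hst : s ⊆ t) : Tame c f s z :=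
  fun ε hε => (h ε hε).filter_mono (nhdsWithin_mono z hst)

/-- A continuous injection of a compact set is a homeomorphism onto its image. -/
theorem nhdsWithin_image_le_map {K : Set ℝ} (hK : IsCompact K) {g : ℝ → ℝ}
    (hg : ContinuousOn g K) (hi : InjOn g K) {u : ℝ} (hu : u ∈ K) :
    nhdsWithin (g u) (g '' K) ≤ map g (nhdsWithin u K) := by
  have : CompactSpace K := isCompact_iff_compactSpace.mp hK
  have he : Topology.IsClosedEmbedding (K.domRestrict g) :=
    (continuousOn_iff_continuous_domRestrict.mp hg).isClosedEmbedding (injOn_iff_injective.mp hi)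
  have h1 := he.isEmbedding.map_nhds_eq ⟨u, hu⟩
  rw [range_domRestrict] at h1
  have h2 : map (K.domRestrict g) (nhds ⟨u, hu⟩) = map g (nhdsWithin u K) := by
    rw [← map_nhds_subtype_val ⟨u, hu⟩, map_map]
    rfl
  rw [← h2, h1]
  rfl

/-- A map `W` contracting by `φ` in the second variable turns `c`-tameness at `u` into
`φ c`-tameness at `g u`. -/
theorem Tame.step {Y : Type*} [MetricSpace Y] {K : Set ℝ} (hK : IsCompact K) {g : ℝ → ℝ}
    (hg : ContinuousOn g K) (hi : InjOn g K) {W : ℝ → Y → Y}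
    (hW : ContinuousOn (fun p : ℝ × Y => W p.1 p.2) (K ×ˢ (univ : Set Y)))
    {φ : ℝ → ℝ} (hφ : ∀ s t : ℝ, 0 ≤ s → s ≤ t → φ s ≤ φ t)
    (hWφ : ∀ u ∈ K, ∀ p q : Y, dist (W u p) (W u q) ≤ φ (dist p q))
    {f : ℝ → Y} (hf : ∀ u ∈ K, f (g u) = W u (f u))
    {c : ℝ} {u : ℝ} (hu : u ∈ K) (h : Tame c f K u) : Tame (φ c) f (g '' K) (g u) := by
  intro ε hε
  refine Eventually.filter_mono (nhdsWithin_image_le_map hK hg hi hu) ?_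
  rw [eventually_map]
  have hc := hW (u, f u) ⟨hu, mem_univ _⟩
  have hc' := hc.eventually (ball_mem_nhds _ hε)
  rw [nhdsWithin_prod_eq, nhdsWithin_univ] at hc'
  obtain ⟨pa, hpa, pb, hpb, hab⟩ := eventually_prod_iff.mp hc'
  obtain ⟨δ, hδ, hball⟩ := Metric.eventually_nhds_iff.mp hpb
  filter_upwards [hpa, h δ hδ, self_mem_nhdsWithin] with t ht hw htK
  obtain ⟨w, hw1, hw2⟩ := hw
  refine ⟨W t w, ?_, ?_⟩
  · rw [hf u hu]
    exact hab ht (hball hw1)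
  · rw [hf t htK]
    exact (hWφ t htK _ _).trans (hφ _ _ dist_nonneg hw2)

/-- Tameness with constants tending to zero is continuity. -/
theorem continuousWithinAt_of_tame {Y : Type*} [MetricSpace Y] {c : ℕ → ℝ}
    (hc : Tendsto c atTop (nhds 0)) {f : ℝ → Y} {s : Set ℝ} {z : ℝ}
    (h : ∀ k, Tame (c k) f s z) : ContinuousWithinAt f s z := by
  rw [ContinuousWithinAt, Metric.tendsto_nhds]
  intro ε hε
  obtain ⟨k, hk⟩ := (hc.eventually (gt_mem_nhds (half_pos hε))).exists
  filter_upwards [h k (ε / 2) (half_pos hε)] with t ht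
  obtain ⟨w, hw1, hw2⟩ := ht
  linarith [dist_triangle (f t) w (f z)]

theorem exists_mem_Icc_succ {x : ℕ → ℝ} {b : ℝ} (hxb : Tendsto x atTop (nhds b))
    {z : ℝ} (hz0 : x 0 ≤ z) (hzb : z < b) : ∃ n, x n ≤ z ∧ z < x (n + 1) := by
  classical
  have hex : ∃ n, z < x n := (hxb.eventually (lt_mem_nhds hzb)).exists
  have hs := Nat.find_spec hex
  have hm := fun k => Nat.find_min hex (m := k)
  rcases hn : Nat.find hex with _ | n
  · rw [hn] at hs
    exact absurd hs (not_lt.mpr hz0)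
  · rw [hn] at hs hm
    exact ⟨n, not_lt.mp (hm n (Nat.lt_succ_self n)), hs⟩

/-- If `F (k + 1)` is obtained from `F k` through the maps `W n`, and likewise for `G`, then
the sequences approach each other at the rate `φ^[k] D`, where `D` bounds all distances in `Y`. -/
theorem dist_le_iterate {Y : Type*} [MetricSpace Y] {x : ℕ → ℝ} {b : ℝ} {M : Y}
    {l : ℕ → ℝ → ℝ} {W : ℕ → ℝ → Y → Y} {φ : ℝ → ℝ}
    (hcover : ∀ z ∈ Icc (x 0) b, z = b ∨ ∃ n, ∃ u ∈ Icc (x 0) b, l (n + 1) u = z)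
    (hφ0 : ∀ t : ℝ, 0 ≤ t → 0 ≤ φ t)
    (hφmono : ∀ s t : ℝ, 0 ≤ s → s ≤ t → φ s ≤ φ t)
    (hWφ : ∀ n : ℕ, ∀ u ∈ Icc (x 0) b, ∀ p q : Y,
      dist (W (n + 1) u p) (W (n + 1) u q) ≤ φ (dist p q))
    {D : ℝ} (hD : ∀ p q : Y, dist p q ≤ D) {F G : ℕ → ℝ → Y}
    (hF : ∀ k n, ∀ u ∈ Icc (x 0) b, F (k + 1) (l (n + 1) u) = W (n + 1) u (F k u))
    (hG : ∀ k n, ∀ u ∈ Icc (x 0) b, G (k + 1) (l (n + 1) u) = W (n + 1) u (G k u))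
    (hFb : ∀ k, F k b = M) (hGb : ∀ k, G k b = M) (k : ℕ) :
    ∀ z ∈ Icc (x 0) b, dist (F k z) (G k z) ≤ φ^[k] D := by
  have hnn : ∀ k, 0 ≤ φ^[k] D := by
    intro k
    induction k with
    | zero => exact dist_nonneg.trans (hD M M)
    | succ k ih => rw [Function.iterate_succ_apply']; exact hφ0 _ ih
  induction k with
  | zero => exact fun z _ => hD _ _
  | succ k ih =>
    intro z hz
    rcases hcover z hz with rfl | ⟨n, u, hu, rfl⟩
    · rw [hFb, hGb, dist_self]
      exact hnn _
    · rw [hF k n u hu, hG k n u hu, Function.iterate_succ_apply']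
      exact (hWφ n u hu _ _).trans (hφmono _ _ dist_nonneg (ih u hu))

theorem T_unique_fixed_point_interpolates
    {Y : Type*} [MetricSpace Y] [CompactSpace Y]
    (x : ℕ → ℝ) (hx : StrictMono x) (b : ℝ) (hxb : Tendsto x atTop (nhds b))
    (y : ℕ → Y) (M : Y) (hyM : Tendsto y atTop (nhds M))
    (L : ℕ → ℝ) (hL0 : ∀ n : ℕ, 0 ≤ L (n + 1)) (hL1 : ∀ n : ℕ, L (n + 1) < 1)
    (hLsup : (⨆ n : ℕ, L (n + 1)) < 1)
    (l : ℕ → ℝ → ℝ)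
    (hl_lip : ∀ n : ℕ, ∀ u ∈ Icc (x 0) b, ∀ v ∈ Icc (x 0) b,
      |l (n + 1) u - l (n + 1) v| ≤ L (n + 1) * |u - v|)
    (hl_inj : ∀ n : ℕ, InjOn (l (n + 1)) (Icc (x 0) b))
    (hl_image : ∀ n : ℕ, l (n + 1) '' Icc (x 0) b = Icc (x n) (x (n + 1)))
    (hl_a : ∀ n : ℕ, l (n + 1) (x 0) = x n) (hl_b : ∀ n : ℕ, l (n + 1) b = x (n + 1))
    (W : ℕ → ℝ → Y → Y)
    (hW_cont : ∀ n : ℕ, ContinuousOn (fun p : ℝ × Y => W (n + 1) p.1 p.2)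
      (Icc (x 0) b ×ˢ (univ : Set Y)))
    (hW_a : ∀ n : ℕ, W (n + 1) (x 0) (y 0) = y n)
    (hW_b : ∀ n : ℕ, W (n + 1) b M = y (n + 1))
    (hW_diam : Tendsto (fun n : ℕ =>
      Metric.diam ((fun p : ℝ × Y => W (n + 1) p.1 p.2) ''
        (Icc (x 0) b ×ˢ (univ : Set Y)))) atTop (nhds 0))
    (φ : ℝ → ℝ) (hφ0 : ∀ t : ℝ, 0 ≤ t → 0 ≤ φ t)
    (hφmono : ∀ s t : ℝ, 0 ≤ s → s ≤ t → φ s ≤ φ t)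
    (hφiter : ∀ t : ℝ, 0 < t → Tendsto (fun k : ℕ => φ^[k] t) atTop (nhds 0))
    (hWφ : ∀ n : ℕ, ∀ u ∈ Icc (x 0) b, ∀ p q : Y,
      dist (W (n + 1) u p) (W (n + 1) u q) ≤ φ (dist p q))
    (T : (ℝ → Y) → ℝ → Y)
    (hT : ∀ f : ℝ → Y, ContinuousOn f (Icc (x 0) b) → f (x 0) = y 0 → f b = M →
      (∀ n : ℕ, ∀ u ∈ Icc (x 0) b, T f (l (n + 1) u) = W (n + 1) u (f u)) ∧ T f b = M)
    :
    ∃ fs : ℝ → Y,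
      (ContinuousOn fs (Icc (x 0) b) ∧ fs (x 0) = y 0 ∧ fs b = M) ∧
      EqOn (T fs) fs (Icc (x 0) b) ∧
      (∀ g : ℝ → Y, ContinuousOn g (Icc (x 0) b) → g (x 0) = y 0 → g b = M →
        EqOn (T g) g (Icc (x 0) b) → EqOn g fs (Icc (x 0) b)) ∧
      (∀ n : ℕ, fs (x n) = y n) ∧ fs b = M := by
  have hmono := hx.monotone
  have hlt : ∀ n, x n < b := fun n =>
    (hx (Nat.lt_succ_self n)).trans_le (hmono.ge_of_tendsto hxb (n + 1))
  have haK : x 0 ∈ Icc (x 0) b := ⟨le_rfl, (hlt 0).le⟩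
  have hbK : b ∈ Icc (x 0) b := ⟨(hlt 0).le, le_rfl⟩
  have hlmem : ∀ n, ∀ u ∈ Icc (x 0) b, l (n + 1) u ∈ Icc (x n) (x (n + 1)) := fun n u hu =>
    hl_image n ▸ mem_image_of_mem _ hu
  have hlcont : ∀ n, ContinuousOn (l (n + 1)) (Icc (x 0) b) := by
    intro n
    have : LipschitzOnWith (L (n + 1)).toNNReal (l (n + 1)) (Icc (x 0) b) := by
      refine LipschitzOnWith.of_dist_le_mul fun u hu v hv => ?_
      rw [Real.coe_toNNReal _ (hL0 n), Real.dist_eq, Real.dist_eq]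
      exact hl_lip n u hu v hv
    exact this.continuousOn
  have hcover : ∀ z ∈ Icc (x 0) b, z = b ∨ ∃ n, ∃ u ∈ Icc (x 0) b, l (n + 1) u = z := by
    intro z hz
    rcases hz.2.eq_or_lt with h | h
    · exact Or.inl h
    · obtain ⟨n, h1, h2⟩ := exists_mem_Icc_succ hxb hz.1 h
      have : z ∈ l (n + 1) '' Icc (x 0) b := hl_image n ▸ ⟨h1, h2.le⟩
      exact Or.inr ⟨n, this⟩
  -- Two pieces meet only at a common node, where the endpoint conditions on `W` agree.
  have hcompat_lt : ∀ f : ℝ → Y, f (x 0) = y 0 → f b = M → ∀ n k, n < k →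
      ∀ u ∈ Icc (x 0) b, ∀ v ∈ Icc (x 0) b, l (n + 1) u = l (k + 1) v →
        W (n + 1) u (f u) = W (k + 1) v (f v) := by
    intro f hfa hfb n k hnk u hu v hv huv
    have h1 := (hlmem n u hu).2
    have h2 := (hlmem k v hv).1
    have h3 : x (n + 1) ≤ x k := hmono hnk
    have hk : k = n + 1 := hx.injective (by linarith)
    subst hk
    have hub : u = b := hl_inj n hu hbK (by rw [hl_b]; linarith)
    have hva : v = x 0 := hl_inj (n + 1) hv haK (by rw [hl_a]; linarith)
    rw [hub, hva, hfa, hfb, hW_b, hW_a]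
  have hcompat : ∀ f : ℝ → Y, f (x 0) = y 0 → f b = M → ∀ n k,
      ∀ u ∈ Icc (x 0) b, ∀ v ∈ Icc (x 0) b, l (n + 1) u = l (k + 1) v →
        W (n + 1) u (f u) = W (k + 1) v (f v) := by
    intro f hfa hfb n k u hu v hv huv
    rcases lt_trichotomy n k with h | h | h
    · exact hcompat_lt f hfa hfb n k h u hu v hv huv
    · subst h
      rw [hl_inj n hu hv huv]
    · exact (hcompat_lt f hfa hfb k n h v hv u hu huv.symm).symm
  -- The operator on all functions with the prescribed endpoint values, continuous or not.
  have hS : ∀ f : {f : ℝ → Y // f (x 0) = y 0 ∧ f b = M},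
      ∃ g : {f : ℝ → Y // f (x 0) = y 0 ∧ f b = M},
        ∀ n, ∀ u ∈ Icc (x 0) b, g.1 (l (n + 1) u) = W (n + 1) u (f.1 u) := by
    rintro ⟨f, hfa, hfb⟩
    have hval : ∀ z, ∃ p, (∀ n, ∀ u ∈ Icc (x 0) b, l (n + 1) u = z → p = W (n + 1) u (f u)) ∧
        (z = b → p = M) := by
      intro z
      by_cases hz : ∃ n, ∃ u ∈ Icc (x 0) b, l (n + 1) u = z
      · obtain ⟨n, u, hu, rfl⟩ := hz
        refine ⟨W (n + 1) u (f u), fun k v hv h => hcompat f hfa hfb n k u hu v hv h.symm, ?_⟩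
        intro h
        exact absurd h ((hlmem n u hu).2.trans_lt (hlt _)).ne
      · exact ⟨M, fun n u hu h => absurd ⟨n, u, hu, h⟩ hz, fun _ => rfl⟩
    choose g hg1 hg2 using hval
    refine ⟨⟨g, ?_, hg2 b rfl⟩, fun n u hu => hg1 _ n u hu rfl⟩
    rw [hg1 _ 0 (x 0) haK (hl_a 0), hfa, hW_a]
  choose S hS using hS
  obtain ⟨D, hDpos, hD⟩ : ∃ D : ℝ, 0 < D ∧ ∀ p q : Y, dist p q ≤ D := by
    refine ⟨diam (univ : Set Y) + 1, by positivity, fun p q => ?_⟩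
    linarith [dist_le_diam_of_mem isCompact_univ.isBounded (mem_univ p) (mem_univ q)]
  have hDlim := hφiter D hDpos
  let f0 : {f : ℝ → Y // f (x 0) = y 0 ∧ f b = M} :=
    ⟨fun z => if z = b then M else y 0, if_neg (hlt 0).ne, if_pos rfl⟩
  let F : ℕ → ℝ → Y := fun k => (S^[k] f0).1
  have hF : ∀ k n, ∀ u ∈ Icc (x 0) b, F (k + 1) (l (n + 1) u) = W (n + 1) u (F k u) := by
    intro k n u hu
    simp only [F, Function.iterate_succ_apply']
    exact hS _ n u hu
  have hFa : ∀ k, F k (x 0) = y 0 := fun k => (S^[k] f0).2.1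
  have hFb : ∀ k, F k b = M := fun k => (S^[k] f0).2.2
  have hcauchy : ∀ z ∈ Icc (x 0) b, CauchySeq fun k => F k z := by
    intro z hz
    refine cauchySeq_of_le_tendsto_0' (fun k => φ^[k] D) ?_ hDlim
    intro k m hkm
    obtain ⟨j, rfl⟩ := Nat.exists_eq_add_of_le hkm
    refine dist_le_iterate hcover hφ0 hφmono hWφ hD (F := F) (G := fun i => F (i + j)) hF ?_
      hFb (fun i => hFb _) k z hz
    intro i n u hu
    have := hF (i + j) n u hu
    rwa [show i + j + 1 = i + 1 + j by omega] at this
  have hlim : ∀ z, ∃ p, z ∈ Icc (x 0) b → Tendsto (fun k => F k z) atTop (nhds p) := by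
    intro z
    by_cases hz : z ∈ Icc (x 0) b
    · obtain ⟨p, hp⟩ := cauchySeq_tendsto_of_complete (hcauchy z hz)
      exact ⟨p, fun _ => hp⟩
    · exact ⟨M, fun h => absurd h hz⟩
  choose fs hfs using hlim
  have hfsa : fs (x 0) = y 0 :=
    tendsto_nhds_unique (hfs _ haK) (by simp only [hFa]; exact tendsto_const_nhds)
  have hfsb : fs b = M :=
    tendsto_nhds_unique (hfs _ hbK) (by simp only [hFb]; exact tendsto_const_nhds)
  have hlK : ∀ n, ∀ u ∈ Icc (x 0) b, l (n + 1) u ∈ Icc (x 0) b := fun n u hu =>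
    ⟨(hmono (Nat.zero_le n)).trans (hlmem n u hu).1, (hlmem n u hu).2.trans (hlt _).le⟩
  have hself : ∀ n, ∀ u ∈ Icc (x 0) b, fs (l (n + 1) u) = W (n + 1) u (fs u) := by
    intro n u hu
    have h1 := (tendsto_add_atTop_iff_nat 1).mpr (hfs _ (hlK n u hu))
    simp only [hF _ n u hu] at h1
    have h2 : Continuous (W (n + 1) u) := by
      have : ContinuousOn (fun p : Y => W (n + 1) u p) univ :=
        (hW_cont n).comp (f := fun p : Y => (u, p)) (by fun_prop) (fun p _ => ⟨hu, mem_univ _⟩)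
      exact continuousOn_univ.mp this
    exact tendsto_nhds_unique h1 ((h2.tendsto _).comp (hfs u hu))
  have htame : ∀ c, (∀ u ∈ Icc (x 0) b, Tame c fs (Icc (x 0) b) u) →
      ∀ z ∈ Icc (x 0) b, z < b → Tame (φ c) fs (Icc (x 0) b) z := by
    intro c hc z hz hzb
    have hpiece : ∀ n, Tame (φ c) fs (Icc (x n) (x (n + 1))) z := by
      intro n
      by_cases hzn : z ∈ Icc (x n) (x (n + 1))
      · rw [← hl_image n] at hzn ⊢
        obtain ⟨u, hu, rfl⟩ := hzn
        exact Tame.step isCompact_Icc (hlcont n) (hl_inj n) (hW_cont n) hφmono (hWφ n)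
          (hself n) hu (hc u hu)
      · intro ε _
        -- `z` is off a closed piece, so the filter is trivial.
        have hbot : nhdsWithin z (Icc (x n) (x (n + 1))) = ⊥ := by
          rw [← notMem_closure_iff_nhdsWithin_eq_bot, isClosed_Icc.closure_eq]
          exact hzn
        rw [hbot]
        exact eventually_bot
    have hfin : ∀ N, Tame (φ c) fs (Icc (x 0) (x N)) z := by
      intro N
      induction N with
      | zero => exact (hpiece 0).mono (Icc_subset_Icc_right (hmono (Nat.zero_le 1)))
      | succ N ih =>
        refine (ih.union (hpiece N)).mono ?_
        rw [Icc_union_Icc_eq_Icc (hmono (Nat.zero_le N)) (hmono (Nat.le_succ N))]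
    obtain ⟨N, hN⟩ := (hxb.eventually (lt_mem_nhds hzb)).exists
    intro ε hε
    have h1 := eventually_nhdsWithin_iff.mp (hfin N ε hε)
    rw [eventually_nhdsWithin_iff]
    filter_upwards [h1, gt_mem_nhds hN] with t ht htN htK
    exact ht ⟨htK.1, htN.le⟩
  have hcontb : ContinuousWithinAt fs (Icc (x 0) b) b := by
    rw [ContinuousWithinAt, Metric.tendsto_nhds, hfsb]
    intro ε hε
    have hev := (hW_diam.eventually (gt_mem_nhds (half_pos hε))).and
      (Metric.tendsto_nhds.mp hyM (ε / 2) (half_pos hε))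
    obtain ⟨N, hN⟩ := eventually_atTop.mp hev
    rw [eventually_nhdsWithin_iff]
    filter_upwards [lt_mem_nhds (hlt N)] with t htN htK
    rcases htK.2.eq_or_lt with h | h
    · rw [h, hfsb, dist_self]
      exact hε
    · obtain ⟨n, h1, h2⟩ := exists_mem_Icc_succ hxb htK.1 h
      have hNn : N ≤ n := Nat.lt_succ_iff.mp (hx.lt_iff_lt.mp (htN.trans h2))
      have htm : t ∈ l (n + 1) '' Icc (x 0) b := hl_image n ▸ ⟨h1, h2.le⟩
      obtain ⟨u, hu, rfl⟩ := htm
      obtain ⟨hd, hy⟩ := hN n hNn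
      have hbd : Bornology.IsBounded ((fun p : ℝ × Y => W (n + 1) p.1 p.2) ''
          (Icc (x 0) b ×ˢ (univ : Set Y))) := isCompact_univ.isBounded.subset (subset_univ _)
      have hle := dist_le_diam_of_mem hbd
        (mem_image_of_mem _ (⟨hu, mem_univ _⟩ : (u, fs u) ∈ Icc (x 0) b ×ˢ (univ : Set Y)))
        (mem_image_of_mem _
          (⟨haK, mem_univ _⟩ : (x 0, y 0) ∈ Icc (x 0) b ×ˢ (univ : Set Y)))
      simp only [hW_a] at hle
      rw [hself n u hu]
      linarith [dist_triangle (W (n + 1) u (fs u)) (y n) M]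
  have hDnn : ∀ k, 0 ≤ φ^[k] D := by
    intro k
    induction k with
    | zero => exact hDpos.le
    | succ k ih => rw [Function.iterate_succ_apply']; exact hφ0 _ ih
  have htameD : ∀ k, ∀ z ∈ Icc (x 0) b, Tame (φ^[k] D) fs (Icc (x 0) b) z := by
    intro k
    induction k with
    | zero =>
      intro z _ ε hε
      exact Eventually.of_forall fun t => ⟨fs z, by rwa [dist_self], hD _ _⟩
    | succ k ih =>
      intro z hz
      rcases hz.2.eq_or_lt with rfl | h
      · intro ε hε
        filter_upwards [Metric.tendsto_nhds.mp hcontb ε hε] with t ht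
        exact ⟨fs t, ht, by rw [dist_self]; exact hDnn _⟩
      · rw [Function.iterate_succ_apply']
        exact htame _ ih z hz h
  have hcont : ContinuousOn fs (Icc (x 0) b) := fun z hz =>
    continuousWithinAt_of_tame hDlim fun k => htameD k z hz
  obtain ⟨hT1, hT2⟩ := hT fs hcont hfsa hfsb
  refine ⟨fs, ⟨hcont, hfsa, hfsb⟩, ?_, ?_, ?_, hfsb⟩
  · intro z hz
    rcases hcover z hz with rfl | ⟨n, u, hu, rfl⟩
    · rw [hT2, hfsb]
    · rw [hT1 n u hu, hself n u hu]
  · intro g hg hga hgb hgT z hz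
    have hgself : ∀ n, ∀ u ∈ Icc (x 0) b, g (l (n + 1) u) = W (n + 1) u (g u) := by
      intro n u hu
      rw [← (hT g hg hga hgb).1 n u hu, hgT (hlK n u hu)]
    have hle : dist (g z) (fs z) ≤ 0 := ge_of_tendsto' hDlim fun k =>
      dist_le_iterate hcover hφ0 hφmono hWφ hD (F := fun _ => g) (G := fun _ => fs)
        (fun _ => hgself) (fun _ => hself) (fun _ => hgb) (fun _ => hfsb) k z hz
    exact dist_le_zero.mp hle
  · intro n
    rw [← hl_a n, hself n _ haK, hfsa, hW_a]
end

section
/- If f_* ∈ C([a,b]) is a fixed point of the operator T and G = {(x, f_*(x)) : x ∈ [a,b]} is its graph, then G satisfies the set equation closure(∪_{n≥1} f_n(G)) = G, i.e. G is a fixed point of the fractal operator F_S; in particular ∪_{n≥1} f_n(G) ⊆ G and G ⊆ closure(∪_{n≥1} f_n(G)). -/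
/-!
Write `g t = (t, fs t)` for the graph map on `[a, b]`, where `a = x 0`. At a fixed point `fs = T fs`
the defining relation of `T` reads `(l n u, W n u (fs u)) = g (l n u)`, so the `n`-th map sends the
graph `G` onto `g '' [x (n-1), x n]`; hence the union of these images is `g '' U` with
`U = ⋃ n, [x (n-1), x n]`. Since `U ⊆ [a, b]`, this union lies in `G`. Since `x n` increases to `b`,
`[a, b) ⊆ U` (`Ico_subset_iUnion_Icc`), so `U` is dense in `[a, b]`, and continuity of `g` gives
`G ⊆ closure (g '' U)`. Finally `G` is closed, as a continuous image of a compact interval.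
-/

open Set Filter Metric

theorem Ico_subset_iUnion_Icc (x : ℕ → ℝ) (b : ℝ) (hxb : Tendsto x atTop (nhds b)) :
    Ico (x 0) b ⊆ ⋃ n : ℕ, Icc (x n) (x (n + 1)) := by
  classical
  rintro t ⟨h0, hb⟩
  have hex : ∃ n, t < x n := (hxb.eventually (lt_mem_nhds hb)).exists
  -- `t` lies in the interval that ends at the first node exceeding it.
  obtain ⟨n, hn⟩ := Nat.exists_eq_succ_of_ne_zero
    (fun h : Nat.find hex = 0 => absurd (h ▸ Nat.find_spec hex) (not_lt.2 h0))
  refine mem_iUnion.2 ⟨n, not_lt.1 (Nat.find_min hex (by omega)), ?_⟩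
  have := Nat.find_spec hex
  rw [hn] at this
  exact this.le

theorem graph_fixed_by_fractal_operator
    {Y : Type*} [MetricSpace Y] [CompactSpace Y]
    (x : ℕ → ℝ) (hx : StrictMono x) (b : ℝ) (hxb : Tendsto x atTop (nhds b))
    (y : ℕ → Y) (M : Y) (hyM : Tendsto y atTop (nhds M))
    (L : ℕ → ℝ) (hL0 : ∀ n : ℕ, 0 ≤ L (n + 1)) (hL1 : ∀ n : ℕ, L (n + 1) < 1)
    (hLsup : (⨆ n : ℕ, L (n + 1)) < 1)
    (l : ℕ → ℝ → ℝ)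
    (hl_lip : ∀ n : ℕ, ∀ u ∈ Icc (x 0) b, ∀ v ∈ Icc (x 0) b,
      |l (n + 1) u - l (n + 1) v| ≤ L (n + 1) * |u - v|)
    (hl_inj : ∀ n : ℕ, InjOn (l (n + 1)) (Icc (x 0) b))
    (hl_image : ∀ n : ℕ, l (n + 1) '' Icc (x 0) b = Icc (x n) (x (n + 1)))
    (hl_a : ∀ n : ℕ, l (n + 1) (x 0) = x n) (hl_b : ∀ n : ℕ, l (n + 1) b = x (n + 1))
    (W : ℕ → ℝ → Y → Y)
    (hW_cont : ∀ n : ℕ, ContinuousOn (fun p : ℝ × Y => W (n + 1) p.1 p.2)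
      (Icc (x 0) b ×ˢ (univ : Set Y)))
    (hW_a : ∀ n : ℕ, W (n + 1) (x 0) (y 0) = y n)
    (hW_b : ∀ n : ℕ, W (n + 1) b M = y (n + 1))
    (hW_diam : Tendsto (fun n : ℕ =>
      Metric.diam ((fun p : ℝ × Y => W (n + 1) p.1 p.2) ''
        (Icc (x 0) b ×ˢ (univ : Set Y)))) atTop (nhds 0))
    (T : (ℝ → Y) → ℝ → Y)
    (hT : ∀ f : ℝ → Y, ContinuousOn f (Icc (x 0) b) → f (x 0) = y 0 → f b = M →
      (∀ n : ℕ, ∀ u ∈ Icc (x 0) b, T f (l (n + 1) u) = W (n + 1) u (f u)) ∧ T f b = M)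
    :
    ∀ fs : ℝ → Y, ContinuousOn fs (Icc (x 0) b) → fs (x 0) = y 0 → fs b = M →
      EqOn (T fs) fs (Icc (x 0) b) →
      let G : Set (ℝ × Y) := (fun t : ℝ => (t, fs t)) '' Icc (x 0) b
      (⋃ n : ℕ, (fun p : ℝ × Y => (l (n + 1) p.1, W (n + 1) p.1 p.2)) '' G) ⊆ G ∧
      G ⊆ closure (⋃ n : ℕ, (fun p : ℝ × Y => (l (n + 1) p.1, W (n + 1) p.1 p.2)) '' G) ∧
      closure (⋃ n : ℕ, (fun p : ℝ × Y => (l (n + 1) p.1, W (n + 1) p.1 p.2)) '' G) = G := by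
  intro fs hfc hfa hfb hfix G
  have hlt : x 0 < b :=
    (hx Nat.zero_lt_one).trans_le (hx.monotone.ge_of_tendsto hxb 1)
  have hsub : (⋃ n : ℕ, Icc (x n) (x (n + 1))) ⊆ Icc (x 0) b :=
    iUnion_subset fun n => Icc_subset_Icc (hx.monotone n.zero_le)
      (hx.monotone.ge_of_tendsto hxb (n + 1))
  have hgc : ContinuousOn (fun t : ℝ => (t, fs t)) (Icc (x 0) b) := continuousOn_id.prodMk hfc
  have himg : (⋃ n : ℕ, (fun p : ℝ × Y => (l (n + 1) p.1, W (n + 1) p.1 p.2)) '' G) =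
      (fun t : ℝ => (t, fs t)) '' ⋃ n : ℕ, Icc (x n) (x (n + 1)) := by
    rw [image_iUnion]
    refine iUnion_congr fun n => ?_
    rw [← hl_image n, image_image, image_image]
    refine image_congr fun u hu => ?_
    have hmem : l (n + 1) u ∈ Icc (x 0) b :=
      hsub (mem_iUnion.2 ⟨n, hl_image n ▸ mem_image_of_mem _ hu⟩)
    exact Prod.ext rfl (((hT fs hfc hfa hfb).1 n u hu).symm.trans (hfix hmem))
  have h1 : (⋃ n : ℕ, (fun p : ℝ × Y => (l (n + 1) p.1, W (n + 1) p.1 p.2)) '' G) ⊆ G :=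
    himg ▸ image_mono hsub
  have h2 : G ⊆ closure (⋃ n : ℕ, (fun p : ℝ × Y => (l (n + 1) p.1, W (n + 1) p.1 p.2)) '' G) := by
    have hcl := closure_Ico hlt.ne
    have h := ContinuousOn.image_closure (hcl.symm ▸ hgc)
    rw [hcl] at h
    rw [himg]
    exact h.trans (closure_mono (image_mono (Ico_subset_iUnion_Icc x b hxb)))
  have hG : IsClosed G := (isCompact_Icc.image_of_continuousOn hgc).isClosed
  exact ⟨h1, h2, (closure_minimal h1 hG).antisymm h2⟩
end

section
/- (Claim in the proof of Theorem 3.5) For every f_0 ∈ C([a,b]), the graph of T(f_0) equals the image of the graph of f_0 under the fractal operator: G_{T(f_0)} = F_S(G_{f_0}) = closure(∪_{n≥1} f_n(G_{f_0})), where G_g = {(x, g(x)) : x ∈ [a,b]} denotes the graph of g. -/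
/-!
The pieces `f_n(G_{f₀})` of the union are compact, being continuous images of the compact graph
of `f₀`. They shrink to the point `(b, M)`: their first coordinates lie in `[x_{n-1}, x_n]`, and
their second coordinates are within `diam (Im W_n)` of `y_{n-1} = W_n(a, m)`. A sequence of nonempty
closed sets that shrinks to a point `p` has a union whose closure adds only `p`
(`closure_iUnion_of_shrinking`). Finally, the intervals `[x_{n-1}, x_n]` cover `[a, b)`
(`exists_mem_Icc_succ`), so the graph of `T f₀` is exactly the union of the pieces together with
`(b, M)`.
-/

open Set Filter Metric

/-- Away from `p` the family is locally finite, which is why no other limit points appear;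
`p` itself is a limit point because the sets are nonempty. -/
theorem closure_iUnion_of_shrinking {X : Type*} [TopologicalSpace X] [T2Space X]
    (K : ℕ → Set X) (hK : ∀ n, IsClosed (K n)) (hne : ∀ n, (K n).Nonempty) (p : X)
    (hp : ∀ V ∈ nhds p, ∀ᶠ n in atTop, K n ⊆ V) :
    closure (⋃ n, K n) = insert p (⋃ n, K n) := by
  apply Subset.antisymm
  · intro q hq
    by_cases hqp : q = p
    · exact Or.inl hqp
    right
    obtain ⟨O, V, hO, hV, hqO, hpV, hdisj⟩ := t2_separation hqp
    obtain ⟨N, hN⟩ := eventually_atTop.1 (hp V (hV.mem_nhds hpV))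
    -- Near `q` only the first `N` sets are present, and their union is closed.
    have hcl : IsClosed (⋃ n ∈ Finset.range N, K n) :=
      isClosed_biUnion_finset fun n _ => hK n
    have hq' : q ∈ closure (⋃ n ∈ Finset.range N, K n) := by
      rw [_root_.mem_closure_iff] at hq ⊢
      intro O' hO' hqO'
      obtain ⟨r, ⟨hrO', hrO⟩, hr⟩ := hq (O' ∩ O) (hO'.inter hO) ⟨hqO', hqO⟩
      obtain ⟨n, hn⟩ := mem_iUnion.1 hr
      refine ⟨r, hrO', mem_iUnion₂.2 ⟨n, ?_, hn⟩⟩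
      rw [Finset.mem_range]
      by_contra hnN
      exact disjoint_left.1 hdisj hrO (hN n (not_lt.1 hnN) hn)
    rw [hcl.closure_eq] at hq'
    obtain ⟨n, -, hn⟩ := mem_iUnion₂.1 hq'
    exact mem_iUnion.2 ⟨n, hn⟩
  · refine insert_subset ?_ subset_closure
    refine mem_closure_iff_nhds.2 fun V hV => ?_
    obtain ⟨n, hn⟩ := (hp V hV).exists
    obtain ⟨r, hr⟩ := hne n
    exact ⟨r, hn hr, mem_iUnion.2 ⟨n, hr⟩⟩

theorem exists_mem_Icc_succ_s8 {x : ℕ → ℝ} {b : ℝ} (hxb : Tendsto x atTop (nhds b)) {t : ℝ}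
    (h0 : x 0 ≤ t) (ht : t < b) : ∃ n, t ∈ Icc (x n) (x (n + 1)) := by
  classical
  have hex : ∃ n, t < x n := (hxb.eventually_const_lt ht).exists
  -- The least index `n` with `t < x n` is positive because `x 0 ≤ t`.
  obtain ⟨m, hm⟩ : ∃ m, Nat.find hex = m + 1 := by
    refine Nat.exists_eq_succ_of_ne_zero fun h => ?_
    have := Nat.find_spec hex
    rw [h] at this
    exact absurd h0 (not_le.2 this)
  refine ⟨m, not_lt.1 (Nat.find_min hex (by omega)), ?_⟩
  rw [← hm]
  exact (Nat.find_spec hex).le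

theorem graph_T_eq_fractal_operator_graph
    {Y : Type*} [MetricSpace Y] [CompactSpace Y]
    (x : ℕ → ℝ) (hx : StrictMono x) (b : ℝ) (hxb : Tendsto x atTop (nhds b))
    (y : ℕ → Y) (M : Y) (hyM : Tendsto y atTop (nhds M))
    (L : ℕ → ℝ) (hL0 : ∀ n : ℕ, 0 ≤ L (n + 1)) (hL1 : ∀ n : ℕ, L (n + 1) < 1)
    (hLsup : (⨆ n : ℕ, L (n + 1)) < 1)
    (l : ℕ → ℝ → ℝ)
    (hl_lip : ∀ n : ℕ, ∀ u ∈ Icc (x 0) b, ∀ v ∈ Icc (x 0) b,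
      |l (n + 1) u - l (n + 1) v| ≤ L (n + 1) * |u - v|)
    (hl_inj : ∀ n : ℕ, InjOn (l (n + 1)) (Icc (x 0) b))
    (hl_image : ∀ n : ℕ, l (n + 1) '' Icc (x 0) b = Icc (x n) (x (n + 1)))
    (hl_a : ∀ n : ℕ, l (n + 1) (x 0) = x n) (hl_b : ∀ n : ℕ, l (n + 1) b = x (n + 1))
    (W : ℕ → ℝ → Y → Y)
    (hW_cont : ∀ n : ℕ, ContinuousOn (fun p : ℝ × Y => W (n + 1) p.1 p.2)
      (Icc (x 0) b ×ˢ (univ : Set Y)))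
    (hW_a : ∀ n : ℕ, W (n + 1) (x 0) (y 0) = y n)
    (hW_b : ∀ n : ℕ, W (n + 1) b M = y (n + 1))
    (hW_diam : Tendsto (fun n : ℕ =>
      Metric.diam ((fun p : ℝ × Y => W (n + 1) p.1 p.2) ''
        (Icc (x 0) b ×ˢ (univ : Set Y)))) atTop (nhds 0))
    (T : (ℝ → Y) → ℝ → Y)
    (hT : ∀ f : ℝ → Y, ContinuousOn f (Icc (x 0) b) → f (x 0) = y 0 → f b = M →
      (∀ n : ℕ, ∀ u ∈ Icc (x 0) b, T f (l (n + 1) u) = W (n + 1) u (f u)) ∧ T f b = M)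
    :
    ∀ f0 : ℝ → Y, ContinuousOn f0 (Icc (x 0) b) → f0 (x 0) = y 0 → f0 b = M →
      (fun t : ℝ => (t, T f0 t)) '' Icc (x 0) b =
        closure (⋃ n : ℕ, (fun p : ℝ × Y => (l (n + 1) p.1, W (n + 1) p.1 p.2)) ''
          ((fun t : ℝ => (t, f0 t)) '' Icc (x 0) b)) := by
  intro f0 hf0 hfa hfb
  obtain ⟨hTl, hTb⟩ := hT f0 hf0 hfa hfb
  have hxle : ∀ n, x n ≤ b := fun n => hx.monotone.ge_of_tendsto hxb n
  have ha : x 0 ∈ Icc (x 0) b := ⟨le_rfl, hxle 0⟩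
  have hlmem : ∀ n, ∀ u ∈ Icc (x 0) b, l (n + 1) u ∈ Icc (x n) (x (n + 1)) := fun n u hu =>
    hl_image n ▸ mem_image_of_mem _ hu
  have hl_cont : ∀ n, ContinuousOn (l (n + 1)) (Icc (x 0) b) := fun n =>
    (LipschitzOnWith.of_dist_le_mul (K := ⟨L (n + 1), hL0 n⟩) fun u hu v hv =>
      hl_lip n u hu v hv).continuousOn
  have hpiece : ∀ n, (fun p : ℝ × Y => (l (n + 1) p.1, W (n + 1) p.1 p.2)) ''
      ((fun t : ℝ => (t, f0 t)) '' Icc (x 0) b) =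
      (fun u => (l (n + 1) u, W (n + 1) u (f0 u))) '' Icc (x 0) b := fun n => image_image _ _ _
  simp only [hpiece]
  rw [closure_iUnion_of_shrinking _ ?_ ?_ (b, M) ?_]
  · ext ⟨s, z⟩
    simp only [mem_insert_iff, mem_iUnion, mem_image, Prod.mk.injEq]
    constructor
    · rintro ⟨t, ht, rfl, rfl⟩
      rcases ht.2.eq_or_lt with rfl | htb
      · exact Or.inl ⟨rfl, hTb⟩
      · obtain ⟨n, hn⟩ := exists_mem_Icc_succ_s8 hxb ht.1 htb
        rw [← hl_image n] at hn
        obtain ⟨u, hu, rfl⟩ := hn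
        exact Or.inr ⟨n, u, hu, rfl, (hTl n u hu).symm⟩
    · rintro (⟨rfl, rfl⟩ | ⟨n, u, hu, rfl, rfl⟩)
      · exact ⟨s, ⟨hxle 0, le_rfl⟩, rfl, hTb⟩
      · have h := hlmem n u hu
        exact ⟨_, ⟨(hx.monotone n.zero_le).trans h.1, h.2.trans (hxle _)⟩, rfl, hTl n u hu⟩
  · intro n
    refine (isCompact_Icc.image_of_continuousOn ((hl_cont n).prodMk ?_)).isClosed
    exact (hW_cont n).comp (continuousOn_id.prodMk hf0) fun u hu => ⟨hu, mem_univ _⟩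
  · exact fun n => ⟨_, mem_image_of_mem _ ha⟩
  · intro V hV
    obtain ⟨ε, hε, hball⟩ := Metric.mem_nhds_iff.1 hV
    have h1 : ∀ᶠ n in atTop, b - ε < x n := hxb.eventually_const_lt (by linarith)
    have hsum := hW_diam.add (tendsto_iff_dist_tendsto_zero.1 hyM)
    rw [add_zero] at hsum
    filter_upwards [h1, hsum.eventually_lt_const hε] with n hn1 hn2
    rintro _ ⟨u, hu, rfl⟩
    apply hball
    have h := hlmem n u hu
    rw [Metric.mem_ball, Prod.dist_eq, max_lt_iff]
    constructor
    · rw [Real.dist_eq, abs_lt]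
      have := h.2.trans (hxle _)
      constructor <;> linarith [h.1]
    · have hd := Metric.dist_le_diam_of_mem
        (((isCompact_Icc.prod isCompact_univ).image_of_continuousOn (hW_cont n)).isBounded)
        (mem_image_of_mem (fun p : ℝ × Y => W (n + 1) p.1 p.2)
          (show (u, f0 u) ∈ Icc (x 0) b ×ˢ (univ : Set Y) from ⟨hu, mem_univ _⟩))
        (mem_image_of_mem (fun p : ℝ × Y => W (n + 1) p.1 p.2)
          (show (x 0, y 0) ∈ Icc (x 0) b ×ˢ (univ : Set Y) from ⟨ha, mem_univ _⟩))
      simp only [hW_a n] at hd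
      exact (dist_triangle _ (y n) _).trans_lt (by linarith)
end

section
/- For every f_0 ∈ C([a,b]) and every k ≥ 1, the k-th iterate of the fractal operator applied to the graph of f_0 equals the graph of the k-th iterate of T applied to f_0: F_S^{[k]}(G_{f_0}) = G_{T^{[k]}(f_0)}, where G_g denotes the graph of g and F_S^{[k]}, T^{[k]} denote k-fold compositions. -/
open Set Filter Metric

/-!
Call `f` admissible if it is continuous on `[a, b]` with `f a = m` and `f b = M`. One application of
the fractal operator turns the graph of an admissible `f` into the graph of
`T f`; the result for iterates follows by induction because `T` preserves admissibility.
For one step, the functional equation `T f (l n u) = W n u (f u)` says that the `n`-th map sends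
the graph of `f` onto the part of the graph of `T f` above `[x (n-1), x n]`. These intervals cover
`[a, b)` (`iUnion_Icc_succ_eq_Ico`), so the union of the images is the graph of `T f` above
`[a, b)`. Since `T f` is continuous on `[a, b]`, the closure of that set is the whole graph
(`closure_graph_Ico`): taking the closure adds exactly the endpoint `(b, M)`.
-/

theorem iUnion_Icc_succ_eq_Ico {x : ℕ → ℝ} (hx : StrictMono x) {b : ℝ}
    (hxb : Tendsto x atTop (nhds b)) :
    (⋃ n : ℕ, Icc (x n) (x (n + 1))) = Ico (x 0) b := by
  have hlt : ∀ n, x n < b := fun n =>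
    (hx n.lt_succ_self).trans_le (hx.monotone.ge_of_tendsto hxb _)
  ext t
  simp only [mem_iUnion, mem_Icc, mem_Ico]
  constructor
  · rintro ⟨n, h1, h2⟩
    exact ⟨(hx.monotone n.zero_le).trans h1, h2.trans_lt (hlt _)⟩
  · rintro ⟨h1, h2⟩
    have hex : ∃ n, t < x n := (hxb.eventually (lt_mem_nhds h2)).exists
    classical
    -- The first node beyond `t` is the right end of the interval containing `t`.
    obtain ⟨m, hm⟩ : ∃ m, Nat.find hex = m + 1 :=
      Nat.exists_eq_succ_of_ne_zero fun h0 => by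
        have := Nat.find_spec hex
        rw [h0] at this
        exact absurd this (not_lt.mpr h1)
    refine ⟨m, not_lt.mp (Nat.find_min hex (by omega)), ?_⟩
    have := Nat.find_spec hex
    rw [hm] at this
    exact this.le

theorem closure_graph_Ico {Y : Type*} [TopologicalSpace Y] [T2Space Y] {a b : ℝ} (hab : a < b)
    {g : ℝ → Y} (hg : ContinuousOn g (Icc a b)) :
    closure ((fun t : ℝ => (t, g t)) '' Ico a b) = (fun t : ℝ => (t, g t)) '' Icc a b := by
  have hG : ContinuousOn (fun t : ℝ => (t, g t)) (Icc a b) := continuousOn_id.prodMk hg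
  apply Subset.antisymm
  · exact closure_minimal (image_mono Ico_subset_Icc_self)
      (isCompact_Icc.image_of_continuousOn hG).isClosed
  · have hcl : closure (Ico a b) = Icc a b := closure_Ico hab.ne
    have h := ContinuousOn.image_closure (s := Ico a b) (hcl ▸ hG)
    rwa [hcl] at h

theorem iterate_fractal_operator_graph
    {Y : Type*} [MetricSpace Y] [CompactSpace Y]
    (x : ℕ → ℝ) (hx : StrictMono x) (b : ℝ) (hxb : Tendsto x atTop (nhds b))
    (y : ℕ → Y) (M : Y) (hyM : Tendsto y atTop (nhds M))
    (L : ℕ → ℝ) (hL0 : ∀ n : ℕ, 0 ≤ L (n + 1)) (hL1 : ∀ n : ℕ, L (n + 1) < 1)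
    (hLsup : (⨆ n : ℕ, L (n + 1)) < 1)
    (l : ℕ → ℝ → ℝ)
    (hl_lip : ∀ n : ℕ, ∀ u ∈ Icc (x 0) b, ∀ v ∈ Icc (x 0) b,
      |l (n + 1) u - l (n + 1) v| ≤ L (n + 1) * |u - v|)
    (hl_inj : ∀ n : ℕ, InjOn (l (n + 1)) (Icc (x 0) b))
    (hl_image : ∀ n : ℕ, l (n + 1) '' Icc (x 0) b = Icc (x n) (x (n + 1)))
    (hl_a : ∀ n : ℕ, l (n + 1) (x 0) = x n) (hl_b : ∀ n : ℕ, l (n + 1) b = x (n + 1))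
    (W : ℕ → ℝ → Y → Y)
    (hW_cont : ∀ n : ℕ, ContinuousOn (fun p : ℝ × Y => W (n + 1) p.1 p.2)
      (Icc (x 0) b ×ˢ (univ : Set Y)))
    (hW_a : ∀ n : ℕ, W (n + 1) (x 0) (y 0) = y n)
    (hW_b : ∀ n : ℕ, W (n + 1) b M = y (n + 1))
    (hW_diam : Tendsto (fun n : ℕ =>
      Metric.diam ((fun p : ℝ × Y => W (n + 1) p.1 p.2) ''
        (Icc (x 0) b ×ˢ (univ : Set Y)))) atTop (nhds 0))
    (T : (ℝ → Y) → ℝ → Y)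
    (hT : ∀ f : ℝ → Y, ContinuousOn f (Icc (x 0) b) → f (x 0) = y 0 → f b = M →
      (∀ n : ℕ, ∀ u ∈ Icc (x 0) b, T f (l (n + 1) u) = W (n + 1) u (f u)) ∧ T f b = M)
    (hTC : ∀ f : ℝ → Y, ContinuousOn f (Icc (x 0) b) → f (x 0) = y 0 → f b = M →
      ContinuousOn (T f) (Icc (x 0) b) ∧ T f (x 0) = y 0 ∧ T f b = M)
    :
    ∀ f0 : ℝ → Y, ContinuousOn f0 (Icc (x 0) b) → f0 (x 0) = y 0 → f0 b = M →
      ∀ k : ℕ, 1 ≤ k →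
        (fun K : Set (ℝ × Y) =>
            closure (⋃ n : ℕ, (fun p : ℝ × Y => (l (n + 1) p.1, W (n + 1) p.1 p.2)) '' K))^[k]
          ((fun t : ℝ => (t, f0 t)) '' Icc (x 0) b) =
        (fun t : ℝ => (t, T^[k] f0 t)) '' Icc (x 0) b := by
  have hab : x 0 < b := (hx Nat.zero_lt_one).trans_le (hx.monotone.ge_of_tendsto hxb _)
  have step : ∀ f : ℝ → Y, ContinuousOn f (Icc (x 0) b) → f (x 0) = y 0 → f b = M →
      closure (⋃ n : ℕ, (fun p : ℝ × Y => (l (n + 1) p.1, W (n + 1) p.1 p.2)) ''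
        ((fun t : ℝ => (t, f t)) '' Icc (x 0) b)) =
      (fun t : ℝ => (t, T f t)) '' Icc (x 0) b := by
    intro f hf hfa hfb
    rw [← closure_graph_Ico hab (hTC f hf hfa hfb).1, ← iUnion_Icc_succ_eq_Ico hx hxb, image_iUnion]
    congr 1
    refine iUnion_congr fun n => ?_
    rw [← hl_image n, image_image, image_image]
    refine image_congr fun u hu => ?_
    simp only [(hT f hf hfa hfb).1 n u hu]
  intro f0 hf hfa hfb k hk
  clear hk
  -- The claim also holds for `k = 0`; the induction is over all initial functions, peeling off
  -- the innermost application of each operator.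
  induction k generalizing f0 with
  | zero => rfl
  | succ k ih =>
    obtain ⟨hc, ha, hb⟩ := hTC f0 hf hfa hfb
    rw [Function.iterate_succ_apply, Function.iterate_succ_apply, step f0 hf hfa hfb]
    exact ih (T f0) hc ha hb
end

section
/- Suppose there exists a non-decreasing function φ : [0,∞) → [0,∞) with lim_{k→∞} φ^{[k]}(t) = 0 for all t > 0, such that d(W_n(x,y), W_n(x,y')) ≤ φ(d(y,y')) for all x ∈ [a,b], all y, y' ∈ Y and all n ≥ 1. Then for every ε > 0 there exists n_ε such that for every x ∈ (x_{n_ε}, b) and every f ∈ C([a,b]), d(T_f(x), T_f(b)) ≤ diam(Im W_{n_x + 1}) + d(M, y_{n_x}) < ε, where n_x ≥ n_ε is any index with x ∈ [x_{n_x}, x_{n_x+1}]; consequently T_f is left continuous at b. -/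
/-! Every `z` in the `k`-th subinterval is `l (k + 1) u` for some `u`, so `T f z` lies in the image of
`W (k + 1)`, and so does `y k = W (k + 1) (x 0) (y 0)`. The image is bounded because `Y` is compact,
so `dist (T f z) M` is at most its diameter plus `dist (y k) M`; both terms tend to `0` as `k → ∞`.
Left continuity follows because the subintervals with index at least `N` cover `(x N, b)`
(`exists_mem_Icc_of_mem_Ioo`). -/

open Set Filter Metric

theorem exists_mem_Icc_of_mem_Ioo {x : ℕ → ℝ} (hx : StrictMono x) {b : ℝ}
    (hxb : Tendsto x atTop (nhds b)) {N : ℕ} {z : ℝ} (hz : z ∈ Ioo (x N) b) :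
    ∃ k, N ≤ k ∧ z ∈ Icc (x k) (x (k + 1)) := by
  classical
  have hex : ∃ j, z < x j := (hxb.eventually (lt_mem_nhds hz.2)).exists
  have hj := Nat.find_spec hex
  have hNj : N < Nat.find hex := hx.lt_iff_lt.1 (hz.1.trans hj)
  refine ⟨Nat.find hex - 1, by omega, not_lt.1 (Nat.find_min hex (by omega)), ?_⟩
  rw [Nat.sub_add_cancel (by omega)]
  exact hj.le

theorem Tf_left_continuous_at_b
    {Y : Type*} [MetricSpace Y] [CompactSpace Y]
    (x : ℕ → ℝ) (hx : StrictMono x) (b : ℝ) (hxb : Tendsto x atTop (nhds b))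
    (y : ℕ → Y) (M : Y) (hyM : Tendsto y atTop (nhds M))
    (L : ℕ → ℝ) (hL0 : ∀ n : ℕ, 0 ≤ L (n + 1)) (hL1 : ∀ n : ℕ, L (n + 1) < 1)
    (hLsup : (⨆ n : ℕ, L (n + 1)) < 1)
    (l : ℕ → ℝ → ℝ)
    (hl_lip : ∀ n : ℕ, ∀ u ∈ Icc (x 0) b, ∀ v ∈ Icc (x 0) b,
      |l (n + 1) u - l (n + 1) v| ≤ L (n + 1) * |u - v|)
    (hl_inj : ∀ n : ℕ, InjOn (l (n + 1)) (Icc (x 0) b))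
    (hl_image : ∀ n : ℕ, l (n + 1) '' Icc (x 0) b = Icc (x n) (x (n + 1)))
    (hl_a : ∀ n : ℕ, l (n + 1) (x 0) = x n) (hl_b : ∀ n : ℕ, l (n + 1) b = x (n + 1))
    (W : ℕ → ℝ → Y → Y)
    (hW_cont : ∀ n : ℕ, ContinuousOn (fun p : ℝ × Y => W (n + 1) p.1 p.2)
      (Icc (x 0) b ×ˢ (univ : Set Y)))
    (hW_a : ∀ n : ℕ, W (n + 1) (x 0) (y 0) = y n)
    (hW_b : ∀ n : ℕ, W (n + 1) b M = y (n + 1))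
    (hW_diam : Tendsto (fun n : ℕ =>
      Metric.diam ((fun p : ℝ × Y => W (n + 1) p.1 p.2) ''
        (Icc (x 0) b ×ˢ (univ : Set Y)))) atTop (nhds 0))
    (φ : ℝ → ℝ) (hφ0 : ∀ t : ℝ, 0 ≤ t → 0 ≤ φ t)
    (hφmono : ∀ s t : ℝ, 0 ≤ s → s ≤ t → φ s ≤ φ t)
    (hφiter : ∀ t : ℝ, 0 < t → Tendsto (fun k : ℕ => φ^[k] t) atTop (nhds 0))
    (hWφ : ∀ n : ℕ, ∀ u ∈ Icc (x 0) b, ∀ p q : Y,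
      dist (W (n + 1) u p) (W (n + 1) u q) ≤ φ (dist p q))
    (T : (ℝ → Y) → ℝ → Y)
    (hT : ∀ f : ℝ → Y, ContinuousOn f (Icc (x 0) b) → f (x 0) = y 0 → f b = M →
      (∀ n : ℕ, ∀ u ∈ Icc (x 0) b, T f (l (n + 1) u) = W (n + 1) u (f u)) ∧ T f b = M)
    :
    (∀ ε : ℝ, 0 < ε → ∃ N : ℕ,
      ∀ f : ℝ → Y, ContinuousOn f (Icc (x 0) b) → f (x 0) = y 0 → f b = M →
        ∀ z ∈ Ioo (x N) b, ∀ k : ℕ, N ≤ k → z ∈ Icc (x k) (x (k + 1)) →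
          dist (T f z) (T f b) ≤
            Metric.diam ((fun p : ℝ × Y => W (k + 1) p.1 p.2) ''
              (Icc (x 0) b ×ˢ (univ : Set Y))) + dist M (y k) ∧
          Metric.diam ((fun p : ℝ × Y => W (k + 1) p.1 p.2) ''
              (Icc (x 0) b ×ˢ (univ : Set Y))) + dist M (y k) < ε) ∧
    ∀ f : ℝ → Y, ContinuousOn f (Icc (x 0) b) → f (x 0) = y 0 → f b = M →
      ContinuousWithinAt (T f) (Iio b) b := by
  have hab : x 0 ≤ b := hx.monotone.ge_of_tendsto hxb 0
  have main : ∀ ε : ℝ, 0 < ε → ∃ N : ℕ,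
      ∀ f : ℝ → Y, ContinuousOn f (Icc (x 0) b) → f (x 0) = y 0 → f b = M →
        ∀ z ∈ Ioo (x N) b, ∀ k : ℕ, N ≤ k → z ∈ Icc (x k) (x (k + 1)) →
          dist (T f z) (T f b) ≤
            Metric.diam ((fun p : ℝ × Y => W (k + 1) p.1 p.2) ''
              (Icc (x 0) b ×ˢ (univ : Set Y))) + dist M (y k) ∧
          Metric.diam ((fun p : ℝ × Y => W (k + 1) p.1 p.2) ''
              (Icc (x 0) b ×ˢ (univ : Set Y))) + dist M (y k) < ε := by
    intro ε hε
    have hlim := hW_diam.add ((tendsto_const_nhds (x := M)).dist hyM)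
    rw [dist_self, add_zero] at hlim
    obtain ⟨N, hN⟩ := eventually_atTop.1 (hlim.eventually (gt_mem_nhds hε))
    refine ⟨N, fun f hf hfa hfb z _ k hk hzk => ⟨?_, hN k hk⟩⟩
    obtain ⟨hTl, hTb⟩ := hT f hf hfa hfb
    rw [← hl_image k] at hzk
    obtain ⟨u, hu, rfl⟩ := hzk
    rw [hTl k u hu, hTb, dist_comm M]
    refine (dist_triangle _ (y k) _).trans (add_le_add_left ?_ _)
    refine Metric.dist_le_diam_of_mem isBounded_of_compactSpace
      ⟨(u, f u), ⟨hu, mem_univ _⟩, rfl⟩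
      ⟨(x 0, y 0), ⟨left_mem_Icc.2 hab, mem_univ _⟩, hW_a k⟩
  refine ⟨main, fun f hf hfa hfb => Metric.tendsto_nhds.2 fun ε hε => ?_⟩
  obtain ⟨N, hN⟩ := main ε hε
  have hNb : x N < b := (hx N.lt_succ_self).trans_le (hx.monotone.ge_of_tendsto hxb _)
  filter_upwards [Ioo_mem_nhdsLT hNb] with z hz
  obtain ⟨k, hk, hzk⟩ := exists_mem_Icc_of_mem_Ioo hx hxb hz
  obtain ⟨h1, h2⟩ := hN f hf hfa hfb z hz k hk hzk
  exact h1.trans_lt h2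
end
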